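/- Let ε > 0, δ ∈ (0,1), k > 1, τ > 0, and define S_k(α) = Σ_{δX ≤ p^k ≤ X} (log p) e(p^k α), the sum running over primes p. Then ∫_{−τ}^{τ} |S_k(α)|⁴ dα ≪_{k,δ,ε} (τ X^{2/k} + X^{4/k − 1}) X^{ε}. -/

import Mathlib

open Real MeasureTheory

/-- `e(x) = exp(2πix)` -/
noncomputable def e (x : ℝ) : ℂ := Complex.exp (2 * Real.pi * Complex.I * x)

/-- `S_k(α) = Σ_{δX ≤ p^k ≤ X} (log p) e(p^k α)`, sum over primes `p`. -/
noncomputable def Sk (δ X k : ℝ) (α : ℝ) : ℂ :=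
  ∑ p ∈ (Finset.Icc 1 (Nat.floor X)).filter
      (fun p : ℕ => p.Prime ∧ δ * X ≤ (p : ℝ) ^ k ∧ (p : ℝ) ^ k ≤ X),
    (Real.log p : ℂ) * e ((p : ℝ) ^ k * α)

/-!
By Plancherel, applied to a sum of translates of a bump function, the fourth moment over `[-T, T]`
is at most about `T` times the number of quadruples of integers of size `Y = X ^ (1 / k)` with
`|n₀ ^ k + n₁ ^ k - n₂ ^ k - n₃ ^ k| ≤ 1 / T`. It suffices to take `T ≥ c⁻¹ Y ^ (2 - k)`, so one
must show that there are `O(Y ^ (2 + η))` such quadruples of width `c Y ^ (k - 2)`.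

Let `k'` be the conjugate exponent. The ratios `(n₀ / n₃, n₁ / n₃, n₂ / n₃)` lie near the surface
`t₀ ^ k + t₁ ^ k = t₂ ^ k + 1`, which is cut into cells of side `1 / (N σ)`, with `n₃ ∼ N`. The
exponential sum over the quadruples of one cell is large on the plank polar to the cell, so that
the quadruples are bounded in number by the lattice points of a slightly larger plank. As the
planks are conormal to the surface, these lattice points are near-solutions of the same inequality
with exponent `k'`, at heights at most `σ ^ 2 N`, and each of them lies in few planks. Hence the
number of near-solutions at height `N`, divided by `N ^ 2`, is bounded by a constant times the sum
of its analogues for `k'` at heights at most `σ ^ 2 N`. Iterating this with `σ` small costs only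
`N ^ η`.
-/

/-! ### Lattice characters and duality -/

section Character

open FourierTransform

lemma e_eq_fourierChar (x : ℝ) : e x = 𝐞 x := by
  rw [Real.fourierChar_apply, e]; congr 1; push_cast; ring

lemma e_add (x y : ℝ) : e (x + y) = e x * e y := by
  simp only [e_eq_fourierChar, AddChar.map_add_eq_mul, Circle.coe_mul]

lemma conj_e (x : ℝ) : (starRingEnd ℂ) (e x) = e (-x) := by
  simp only [e_eq_fourierChar, AddChar.map_neg_eq_inv, Circle.coe_inv_eq_conj]

lemma e_sum {ι : Type*} (s : Finset ι) (f : ι → ℝ) : e (∑ i ∈ s, f i) = ∏ i ∈ s, e (f i) := by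
  simp only [e, ← Complex.exp_sum, Complex.ofReal_sum, Finset.mul_sum]

lemma e_intCast (n : ℤ) : e n = 1 := by
  rw [e, Complex.ofReal_intCast, mul_comm, Complex.exp_int_mul_two_pi_mul_I]

lemma re_e (x : ℝ) : (e x).re = cos (2 * π * x) := by
  rw [e_eq_fourierChar, Real.fourierChar_apply, Complex.exp_ofReal_mul_I_re]

lemma continuous_e : Continuous e := by
  unfold e; fun_prop

lemma half_sqrt_two_le_re_e {x : ℝ} (hx : |x| ≤ 1 / 8) : √2 / 2 ≤ (e x).re := by
  rw [re_e, ← cos_pi_div_four, ← cos_abs (2 * π * x), abs_mul, abs_of_pos two_pi_pos]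
  exact cos_le_cos_of_nonneg_of_le_pi (by positivity) (by linarith [pi_pos])
    (by nlinarith [pi_pos])

lemma integral_e_intCast_mul (n : ℤ) :
    ∫ t in Set.Ico (0 : ℝ) 1, e (n * t) = if n = 0 then 1 else 0 := by
  rw [integral_Ico_eq_integral_Ioc, ← intervalIntegral.integral_of_le zero_le_one]
  split_ifs with h
  · simp [h, e]
  · have hexp (t : ℝ) : e (n * t) = Complex.exp (2 * π * Complex.I * n * t) := by
      rw [e]; push_cast; ring_nf
    simp only [hexp]
    rw [integral_exp_mul_complex (by simp [h, pi_ne_zero]), ← hexp, ← hexp, mul_one, e_intCast]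
    simp [e]

end Character

section Duality

variable {ι : Type*} [Fintype ι]

/-- The character `ξ ↦ e(x·ξ)` of `ℝ^ι` attached to a lattice point `x`. -/
noncomputable def latticeChar (x : ι → ℤ) (ξ : ι → ℝ) : ℂ := e (∑ j, x j * ξ j)

lemma continuous_latticeChar (x : ι → ℤ) : Continuous (latticeChar x) :=
  continuous_e.comp (by fun_prop)

lemma latticeChar_mul_conj (x y : ι → ℤ) (ξ : ι → ℝ) :
    latticeChar x ξ * (starRingEnd ℂ) (latticeChar y ξ) = latticeChar (x - y) ξ := by
  simp only [latticeChar, conj_e, ← e_add, ← sub_eq_add_neg, ← Finset.sum_sub_distrib,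
    Pi.sub_apply, Int.cast_sub, sub_mul]

lemma latticeChar_intCast_add (x z : ι → ℤ) (ξ : ι → ℝ) :
    latticeChar x ((fun j => (z j : ℝ)) + ξ) = latticeChar x ξ := by
  have hInt : ∑ j, (x j : ℝ) * z j = ((∑ j, x j * z j : ℤ) : ℝ) := by push_cast; rfl
  simp only [latticeChar, Pi.add_apply, mul_add, Finset.sum_add_distrib, e_add, hInt, e_intCast,
    one_mul]

lemma setIntegral_latticeChar (x : ι → ℤ) :
    ∫ ξ in Set.univ.pi fun _ => Set.Ico (0 : ℝ) 1, latticeChar x ξ = if x = 0 then 1 else 0 := by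
  simp only [latticeChar, e_sum]
  rw [volume_pi, Measure.restrict_pi_pi,
    integral_fintype_prod_eq_prod (f := fun j t => e ((x j : ℝ) * t))]
  simp only [integral_e_intCast_mul, Finset.prod_ite_zero, Finset.prod_const_one, funext_iff,
    Finset.mem_univ, true_implies, Pi.zero_apply]

lemma integrableOn_unitCube {f : (ι → ℝ) → ℂ} (hf : Continuous f) :
    IntegrableOn f (Set.univ.pi fun _ => Set.Ico (0 : ℝ) 1) :=
  (hf.integrableOn_Icc (a := 0) (b := 1)).mono_set
    (by rw [← Set.pi_univ_Icc]; exact Set.pi_mono fun _ _ => Set.Ico_subset_Icc_self)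

lemma ofReal_norm_sq_sum_latticeChar (P : Finset (ι → ℤ)) (ξ : ι → ℝ) :
    ((‖∑ x ∈ P, latticeChar x ξ‖ ^ 2 : ℝ) : ℂ) = ∑ x ∈ P, ∑ y ∈ P, latticeChar (x - y) ξ := by
  simp only [← Complex.normSq_eq_norm_sq, ← Complex.mul_conj, map_sum, Finset.sum_mul_sum,
    latticeChar_mul_conj]

lemma continuous_norm_sq_sum_latticeChar (P : Finset (ι → ℤ)) :
    Continuous fun ξ => ‖∑ x ∈ P, latticeChar x ξ‖ ^ 2 :=
  (continuous_finsetSum _ fun x _ => continuous_latticeChar x).norm.pow 2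

lemma setLIntegral_norm_sq_sum_latticeChar (P : Finset (ι → ℤ)) :
    ∫⁻ ξ in Set.univ.pi fun _ => Set.Ico (0 : ℝ) 1,
      ENNReal.ofReal (‖∑ x ∈ P, latticeChar x ξ‖ ^ 2) = P.card := by
  classical
  have hInt (x : ι → ℤ) := integrableOn_unitCube (continuous_latticeChar x)
  have hcomplex : ((∫ ξ in Set.univ.pi fun _ => Set.Ico (0 : ℝ) 1,
      ‖∑ x ∈ P, latticeChar x ξ‖ ^ 2 : ℝ) : ℂ) = (P.card : ℝ) := by
    simp only [← integral_complex_ofReal, ofReal_norm_sq_sum_latticeChar]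
    rw [integral_finsetSum _ fun x _ => integrable_finsetSum _ fun _ _ => hInt _]
    simp only [integral_finsetSum _ fun _ _ => hInt _, setIntegral_latticeChar, sub_eq_zero]
    simp
  rw [← ofReal_integral_eq_lintegral_ofReal _ (.of_forall fun ξ => by positivity),
    Complex.ofReal_injective hcomplex, ENNReal.ofReal_natCast]
  exact_mod_cast (integrableOn_unitCube (Complex.continuous_ofReal.comp
    (continuous_norm_sq_sum_latticeChar P))).re

lemma lintegral_eq_setLIntegral_tsum_int {f : (ι → ℝ) → ENNReal} (hf : Measurable f) :
    ∫⁻ ξ, f ξ = ∫⁻ ξ in Set.univ.pi fun _ => Set.Ico (0 : ℝ) 1,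
      ∑' z : ι → ℤ, f ((fun j => (z j : ℝ)) + ξ) := by
  let b := Pi.basisFun ℝ ι
  let latticeEquiv : (Submodule.span ℤ (Set.range b)).toAddSubgroup ≃ (ι → ℤ) :=
    (b.restrictScalars ℤ).equivFun.toEquiv
  have hcoe (g : (Submodule.span ℤ (Set.range b)).toAddSubgroup) :
      (fun j => (latticeEquiv g j : ℝ)) = (g : ι → ℝ) :=
    funext fun j => b.restrictScalars_repr_apply ℤ g j
  have : Countable (Submodule.span ℤ (Set.range b)).toAddSubgroup :=
    latticeEquiv.injective.countable
  rw [(ZSpan.isAddFundamentalDomain' b volume).lintegral_eq_tsum'',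
    ZSpan.fundamentalDomain_pi_basisFun,
    ← lintegral_tsum (f := fun g ξ => f (g +ᵥ ξ))
      fun g => (hf.comp (measurable_const_vadd g)).aemeasurable]
  refine lintegral_congr fun ξ => ?_
  rw [← latticeEquiv.tsum_eq]
  simp only [hcoe]
  rfl

omit [Fintype ι] in
lemma tsum_indicator_one_le_card (B : Set (ι → ℝ)) (H : Finset (ι → ℤ)) (ξ : ι → ℝ)
    (hH : ∀ x ∈ B, ∀ y ∈ B, ∀ h : ι → ℤ, (x - y = fun j => (h j : ℝ)) → h ∈ H) :
    ∑' z : ι → ℤ, B.indicator (1 : (ι → ℝ) → ENNReal) ((fun j => (z j : ℝ)) + ξ) ≤ H.card := by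
  let S : Set (ι → ℤ) := {z | (fun j => (z j : ℝ)) + ξ ∈ B}
  change ∑' z, S.indicator 1 z ≤ _
  rw [← tsum_subtype, Pi.one_def, ENNReal.tsum_set_one]
  rcases S.eq_empty_or_nonempty with hS | ⟨z₀, hz₀⟩
  · simp [hS]
  have hmaps : Set.MapsTo (fun z => z - z₀) S H := fun z hz =>
    hH _ hz _ hz₀ _ (by ext j; simp)
  have hcard := Set.encard_le_encard_of_injOn hmaps (fun x _ y _ hxy => sub_left_injective hxy)
  rw [Set.encard_coe_eq_coe_finsetCard] at hcard
  exact_mod_cast hcard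

lemma sq_card_half_le_norm_sq_sum_latticeChar {P : Finset (ι → ℤ)} {ξ : ι → ℝ}
    (hP : ∀ x ∈ P, |∑ j, x j * ξ j| ≤ 1 / 8) :
    (P.card : ℝ) ^ 2 / 2 ≤ ‖∑ x ∈ P, latticeChar x ξ‖ ^ 2 := by
  have hre : P.card * (√2 / 2) ≤ ‖∑ x ∈ P, latticeChar x ξ‖ := by
    refine le_trans ?_ (Complex.re_le_norm _)
    rw [Complex.re_sum, ← nsmul_eq_mul]
    exact Finset.card_nsmul_le_sum _ _ _ fun x hx => half_sqrt_two_le_re_e (hP x hx)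
  calc (P.card : ℝ) ^ 2 / 2 = (P.card * (√2 / 2)) ^ 2 := by
        rw [mul_pow, div_pow, sq_sqrt zero_le_two]; ring
    _ ≤ _ := by gcongr

/- Compare the square mean over `B` of the exponential sum with frequencies `P`, which is large on
all of `B`, with its mean over a period, which is `#P`. -/
theorem card_mul_volume_le_of_near_dual {P H : Finset (ι → ℤ)} {B : Set (ι → ℝ)}
    (hB : MeasurableSet B) (hP : ∀ x ∈ P, ∀ ξ ∈ B, |∑ j, x j * ξ j| ≤ 1 / 8)
    (hH : ∀ x ∈ B, ∀ y ∈ B, ∀ h : ι → ℤ, (x - y = fun j => (h j : ℝ)) → h ∈ H) :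
    P.card * volume B ≤ 2 * H.card := by
  classical
  let g (ξ : ι → ℝ) : ENNReal := ENNReal.ofReal (‖∑ x ∈ P, latticeChar x ξ‖ ^ 2)
  have hg : Measurable g := (continuous_norm_sq_sum_latticeChar P).measurable.ennreal_ofReal
  have hlower : (P.card : ENNReal) ^ 2 / 2 * volume B ≤ ∫⁻ ξ, B.indicator g ξ := by
    rw [lintegral_indicator hB, ← setLIntegral_const]
    refine setLIntegral_mono hg fun ξ hξ => le_of_eq_of_le ?_ (ENNReal.ofReal_le_ofReal
      (sq_card_half_le_norm_sq_sum_latticeChar fun x hx => hP x hx ξ hξ))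
    rw [ENNReal.ofReal_div_of_pos two_pos, ENNReal.ofReal_pow (by positivity)]
    simp
  have hupper : ∫⁻ ξ, B.indicator g ξ ≤ H.card * P.card := by
    rw [lintegral_eq_setLIntegral_tsum_int (hg.indicator hB),
      ← setLIntegral_norm_sq_sum_latticeChar P, ← lintegral_const_mul _ hg]
    refine lintegral_mono fun ξ => ?_
    have hperiodic (z : ι → ℤ) : B.indicator g ((fun j => (z j : ℝ)) + ξ)
        = B.indicator (1 : (ι → ℝ) → ENNReal) ((fun j => (z j : ℝ)) + ξ) * g ξ := by
      simp only [Set.indicator_apply, Pi.one_apply, ite_mul, one_mul, zero_mul, g,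
        latticeChar_intCast_add]
    simp only [hperiodic, ENNReal.tsum_mul_right]
    gcongr
    exact tsum_indicator_one_le_card B H ξ hH
  rcases eq_or_ne P.card 0 with h0 | h0
  · simp [h0]
  refine (ENNReal.mul_le_mul_iff_right (a := (P.card : ENNReal) / 2) ?_ ?_).1 ?_
  · simpa using h0
  · exact ENNReal.div_ne_top (by simp) (by simp)
  calc (P.card : ENNReal) / 2 * (P.card * volume B) = (P.card : ENNReal) ^ 2 / 2 * volume B := by
        rw [div_eq_mul_inv, div_eq_mul_inv]; ring
    _ ≤ H.card * P.card := hlower.trans hupper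
    _ = (P.card : ENNReal) * (2 / 2) * H.card := by
        rw [ENNReal.div_self two_ne_zero ENNReal.ofNat_ne_top]; ring
    _ = P.card / 2 * (2 * H.card) := by rw [div_eq_mul_inv, div_eq_mul_inv]; ring

end Duality

/-! ### Power functions on compact intervals -/

section Rpow

lemma exists_abs_rpow_sub_rpow_le (p : ℝ) {lo : ℝ} (hi : ℝ) (hlo : 0 < lo) :
    ∃ K ≥ 0, ∀ a ∈ Set.Icc lo hi, ∀ b ∈ Set.Icc lo hi, |b ^ p - a ^ p| ≤ K * |b - a| := by
  have hne (x : ℝ) (hx : x ∈ Set.Icc lo hi) : x ≠ 0 := (hlo.trans_le hx.1).ne'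
  have hcont : ContinuousOn (fun x : ℝ => p * x ^ (p - 1)) (Set.Icc lo hi) :=
    continuousOn_const.mul (continuousOn_id.rpow_const fun x hx => .inl (hne x hx))
  obtain ⟨K, hK⟩ := isCompact_Icc.exists_bound_of_continuousOn hcont
  refine ⟨max K 0, le_max_right _ _, fun a ha b hb => ?_⟩
  exact (convex_Icc lo hi).norm_image_sub_le_of_norm_hasDerivWithin_le
    (fun x hx => (hasDerivAt_rpow_const (.inl (hne x hx))).hasDerivWithinAt)
    (fun x hx => (hK x hx).trans (le_max_left _ _)) ha hb

lemma exists_abs_sub_le_rpow_sub_rpow {p lo : ℝ} (hi : ℝ) (hp : 0 < p) (hlo : 0 < lo) :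
    ∃ K ≥ 0, ∀ a ∈ Set.Icc lo hi, ∀ b ∈ Set.Icc lo hi, |b - a| ≤ K * |b ^ p - a ^ p| := by
  obtain ⟨K, hK0, hK⟩ := exists_abs_rpow_sub_rpow_le p⁻¹ (hi ^ p) (rpow_pos_of_pos hlo p)
  refine ⟨K, hK0, fun a ha b hb => ?_⟩
  have ha0 : 0 ≤ a := hlo.le.trans ha.1
  have hb0 : 0 ≤ b := hlo.le.trans hb.1
  have hmem {x : ℝ} (hx : x ∈ Set.Icc lo hi) : x ^ p ∈ Set.Icc (lo ^ p) (hi ^ p) :=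
    ⟨rpow_le_rpow hlo.le hx.1 hp.le, rpow_le_rpow (hlo.le.trans hx.1) hx.2 hp.le⟩
  simpa only [rpow_rpow_inv ha0 hp.ne', rpow_rpow_inv hb0 hp.ne'] using
    hK _ (hmem ha) _ (hmem hb)

lemma exists_rpow_taylor_two (p : ℝ) {lo : ℝ} (hi : ℝ) (hlo : 0 < lo) :
    ∃ K ≥ 0, ∀ a ∈ Set.Icc lo hi, ∀ b ∈ Set.Icc lo hi,
      |b ^ p - a ^ p - p * a ^ (p - 1) * (b - a)| ≤ K * (b - a) ^ 2 := by
  obtain ⟨K, hK0, hK⟩ := exists_abs_rpow_sub_rpow_le (p - 1) hi hlo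
  refine ⟨|p| * K, by positivity, fun a ha b hb => ?_⟩
  have hsub : Set.uIcc a b ⊆ Set.Icc lo hi := Set.uIcc_subset_Icc ha hb
  have hderiv : ∀ x ∈ Set.uIcc a b, HasDerivWithinAt (fun x => x ^ p - p * a ^ (p - 1) * x)
      (p * x ^ (p - 1) - p * a ^ (p - 1)) (Set.uIcc a b) x := fun x hx =>
    ((hasDerivAt_rpow_const (.inl (hlo.trans_le (hsub hx).1).ne')).sub
      (hasDerivAt_const_mul _)).hasDerivWithinAt
  have hbound : ∀ x ∈ Set.uIcc a b, ‖p * x ^ (p - 1) - p * a ^ (p - 1)‖ ≤ |p| * K * |b - a| := by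
    intro x hx
    rw [← mul_sub, norm_mul, norm_eq_abs, norm_eq_abs, mul_assoc]
    gcongr
    exact (hK a ha x (hsub hx)).trans
      (mul_le_mul_of_nonneg_left (Set.abs_sub_left_of_mem_uIcc hx) hK0)
  have hmvt := (convex_uIcc a b).norm_image_sub_le_of_norm_hasDerivWithin_le hderiv hbound
    Set.left_mem_uIcc Set.right_mem_uIcc
  calc |b ^ p - a ^ p - p * a ^ (p - 1) * (b - a)|
      = ‖b ^ p - p * a ^ (p - 1) * b - (a ^ p - p * a ^ (p - 1) * a)‖ := by
        rw [norm_eq_abs]; ring_nf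
    _ ≤ |p| * K * |b - a| * ‖b - a‖ := hmvt
    _ = |p| * K * (b - a) ^ 2 := by rw [norm_eq_abs, mul_assoc, abs_mul_abs_self, sq]

lemma exists_rpow_taylor_two_homogeneous (p : ℝ) {lo : ℝ} (hi : ℝ) (hlo : 0 < lo) :
    ∃ K ≥ 0, ∀ u ∈ Set.Icc lo hi, ∀ z ≥ (1 : ℝ), ∀ x, |x - z * u| ≤ lo / 2 → 0 < x ∧
      |x ^ p - z ^ p * u ^ p - p * z ^ (p - 1) * u ^ (p - 1) * (x - z * u)|
        ≤ K * z ^ (p - 2) * (x - z * u) ^ 2 := by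
  obtain ⟨K, hK0, hK⟩ := exists_rpow_taylor_two p (hi + lo / 2) (half_pos hlo)
  refine ⟨K, hK0, fun u hu z hz x hx => ?_⟩
  have hz0 : 0 < z := one_pos.trans_le hz
  obtain ⟨v, rfl⟩ : ∃ v, x = z * v := ⟨x / z, by field_simp⟩
  rw [← mul_sub, abs_mul, abs_of_pos hz0] at hx
  have hv : |v - u| ≤ lo / 2 := (le_mul_of_one_le_left (abs_nonneg _) hz).trans hx
  obtain ⟨hvl, hvu⟩ := abs_le.1 hv
  have hv0 : 0 < v := by linarith [hu.1]
  have hz1 : z ^ p = z ^ (p - 1) * z := by rw [← rpow_add_one hz0.ne']; ring_nf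
  have hz2 : z ^ p = z ^ (p - 2) * z ^ 2 := by
    rw [← rpow_natCast, ← rpow_add hz0]; norm_num
  refine ⟨mul_pos hz0 hv0, ?_⟩
  calc |(z * v) ^ p - z ^ p * u ^ p - p * z ^ (p - 1) * u ^ (p - 1) * (z * v - z * u)|
      = |z ^ p * (v ^ p - u ^ p - p * u ^ (p - 1) * (v - u))| := by
        rw [mul_rpow hz0.le hv0.le, hz1]; ring_nf
    _ ≤ z ^ p * (K * (v - u) ^ 2) := by
        rw [abs_mul, abs_of_pos (rpow_pos_of_pos hz0 p)]
        gcongr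
        exact hK u ⟨by linarith [hu.1], by linarith [hu.2]⟩ v
          ⟨by linarith [hu.1], by linarith [hu.2]⟩
    _ = K * z ^ (p - 2) * (z * v - z * u) ^ 2 := by rw [hz2]; ring

end Rpow

/-! ### Planks -/

section Plank

/-- The bilinear form of signature `(2, 1)`; it records on which side of the equation
`x₀ ^ k + x₁ ^ k = x₂ ^ k + x₃ ^ k` the first three variables stand. -/
def signedDot (a b : Fin 3 → ℝ) : ℝ := a 0 * b 0 + a 1 * b 1 - a 2 * b 2

/-- The defect of `t` in the dehomogenized equation `t₀ ^ k + t₁ ^ k = t₂ ^ k + 1`. -/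
noncomputable def powDefect (k : ℝ) (t : Fin 3 → ℝ) : ℝ := t 0 ^ k + t 1 ^ k - t 2 ^ k - 1

/-- The displacement of `ξ` from the point of the line `ℝ (u, 1)` with the same last coordinate. -/
def offset (u : Fin 3 → ℝ) (ξ : Fin 4 → ℝ) (j : Fin 3) : ℝ := ξ j.castSucc - ξ 3 * u j

/-- The box in `ℝ⁴` of length `a` in the direction `(u, 1)`, of thickness `d` in the direction
conormal to `θ`, and of width `b` in the two remaining directions. -/
def plank (θ u : Fin 3 → ℝ) (a b d : ℝ) : Set (Fin 4 → ℝ) :=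
  {ξ | |ξ 3| ≤ a ∧ |offset u ξ 0| ≤ b ∧ |offset u ξ 1| ≤ b ∧ |signedDot (offset u ξ) θ| ≤ d}

lemma abs_add_sub_le (x y z : ℝ) : |x + y - z| ≤ |x| + |y| + |z| :=
  (abs_sub _ _).trans (by gcongr; exact abs_add_le x y)

lemma abs_signedDot_le {a b : Fin 3 → ℝ} {A B : ℝ} (ha : ∀ j, |a j| ≤ A) (hb : ∀ j, |b j| ≤ B) :
    |signedDot a b| ≤ 3 * (A * B) := by
  have hmul (j : Fin 3) : |a j * b j| ≤ A * B := by
    rw [abs_mul]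
    exact mul_le_mul (ha j) (hb j) (abs_nonneg _) ((abs_nonneg _).trans (ha j))
  calc |signedDot a b| ≤ |a 0 * b 0| + |a 1 * b 1| + |a 2 * b 2| := abs_add_sub_le _ _ _
    _ ≤ 3 * (A * B) := by linarith [hmul 0, hmul 1, hmul 2]

lemma offset_neg (u : Fin 3 → ℝ) (ξ : Fin 4 → ℝ) : offset u (-ξ) = -offset u ξ := by
  ext j; simp only [offset, Pi.neg_apply]; ring

lemma offset_sub (u : Fin 3 → ℝ) (ξ ζ : Fin 4 → ℝ) :
    offset u (ξ - ζ) = offset u ξ - offset u ζ := by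
  ext j; simp only [offset, Pi.sub_apply]; ring

lemma signedDot_neg_left (a b : Fin 3 → ℝ) : signedDot (-a) b = -signedDot a b := by
  simp only [signedDot, Pi.neg_apply]; ring

lemma signedDot_sub_left (a b c : Fin 3 → ℝ) :
    signedDot (a - b) c = signedDot a c - signedDot b c := by
  simp only [signedDot, Pi.sub_apply]; ring

variable {θ u : Fin 3 → ℝ} {a b d : ℝ} {ξ ζ : Fin 4 → ℝ}

lemma neg_mem_plank (hξ : ξ ∈ plank θ u a b d) : -ξ ∈ plank θ u a b d := by
  simpa only [plank, Set.mem_ofPred_eq, offset_neg, signedDot_neg_left, Pi.neg_apply, abs_neg]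
    using hξ

lemma sub_mem_plank {a' b' d' : ℝ} (hξ : ξ ∈ plank θ u a b d) (hζ : ζ ∈ plank θ u a' b' d') :
    ξ - ζ ∈ plank θ u (a + a') (b + b') (d + d') := by
  obtain ⟨h3, h0, h1, hd⟩ := hξ
  obtain ⟨h3', h0', h1', hd'⟩ := hζ
  simp only [plank, Set.mem_ofPred_eq, offset_sub, signedDot_sub_left, Pi.sub_apply]
  exact ⟨(abs_sub _ _).trans (add_le_add h3 h3'), (abs_sub _ _).trans (add_le_add h0 h0'),
    (abs_sub _ _).trans (add_le_add h1 h1'), (abs_sub _ _).trans (add_le_add hd hd')⟩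

lemma plank_mono {a' b' d' : ℝ} (ha : a ≤ a') (hb : b ≤ b') (hd : d ≤ d') :
    plank θ u a b d ⊆ plank θ u a' b' d' := fun _ hξ =>
  ⟨hξ.1.trans ha, hξ.2.1.trans hb, hξ.2.2.1.trans hb, hξ.2.2.2.trans hd⟩

lemma measurableSet_plank (θ u : Fin 3 → ℝ) (a b d : ℝ) : MeasurableSet (plank θ u a b d) := by
  simp only [plank, offset, signedDot]
  measurability

/-- The linear map straightening planks to boxes. -/
def straighten (θ u : Fin 3 → ℝ) : Matrix (Fin 4) (Fin 4) ℝ :=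
  !![0, 0, 0, 1; 1, 0, 0, -u 0; 0, 1, 0, -u 1;
    θ 0, θ 1, -θ 2, -(u 0 * θ 0 + u 1 * θ 1 - u 2 * θ 2)]

lemma straighten_mulVec (θ u : Fin 3 → ℝ) (ξ : Fin 4 → ℝ) : (straighten θ u).mulVec ξ =
    ![ξ 3, offset u ξ 0, offset u ξ 1, signedDot (offset u ξ) θ] := by
  ext j
  fin_cases j <;>
    simp [straighten, Matrix.mulVec, dotProduct, Fin.sum_univ_succ, offset, signedDot] <;> ring

lemma det_straighten (θ u : Fin 3 → ℝ) : (straighten θ u).det = θ 2 := by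
  simp [straighten, Matrix.det_succ_row_zero, Fin.sum_univ_succ, Fin.succAbove]
  ring

lemma plank_eq_preimage (θ u : Fin 3 → ℝ) (a b d : ℝ) : plank θ u a b d =
    Matrix.toLin' (straighten θ u) ⁻¹'
      Set.univ.pi fun j => Set.Icc (-![a, b, b, d] j) (![a, b, b, d] j) := by
  ext ξ
  simp [plank, straighten_mulVec, abs_le, Fin.forall_fin_succ, -Set.pi_univ_Icc]

lemma volume_plank (u : Fin 3 → ℝ) (hθ : 0 < θ 2) (ha : 0 ≤ a) (hb : 0 ≤ b) (hd : 0 ≤ d) :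
    volume (plank θ u a b d) = ENNReal.ofReal (16 * a * b ^ 2 * d / θ 2) := by
  have hdet : LinearMap.det (Matrix.toLin' (straighten θ u)) = θ 2 := by
    rw [LinearMap.det_toLin', det_straighten]
  have hnonneg (j : Fin 4) : 0 ≤ ![a, b, b, d] j - -![a, b, b, d] j := by
    fin_cases j <;> simp <;> linarith
  rw [plank_eq_preimage, Measure.addHaar_preimage_linearMap _ (hdet ▸ hθ.ne'), hdet,
    volume_pi_pi, abs_of_pos (inv_pos.2 hθ)]
  simp only [volume_Icc]
  rw [← ENNReal.ofReal_prod_of_nonneg fun j _ => hnonneg j,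
    ← ENNReal.ofReal_mul (inv_pos.2 hθ).le]
  congr 1
  simp [Fin.prod_univ_succ]
  ring

variable {R : ℝ}

lemma abs_offset_le (hR : 1 ≤ R) (hθ : ∀ j, θ j ∈ Set.Icc R⁻¹ R) (hdb : d ≤ b)
    (hξ : ξ ∈ plank θ u a b d) (j : Fin 3) : |offset u ξ j| ≤ 3 * R ^ 2 * b := by
  obtain ⟨-, h0, h1, hd⟩ := hξ
  have hR0 : 0 < R := one_pos.trans_le hR
  have hb0 : 0 ≤ b := (abs_nonneg _).trans h0
  have hbR : b ≤ 3 * R ^ 2 * b := le_mul_of_one_le_left hb0 (by nlinarith)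
  have hθ0 (j : Fin 3) : 0 < θ j := (inv_pos.2 hR0).trans_le (hθ j).1
  have hmul {j : Fin 3} (hj : |offset u ξ j| ≤ b) : |offset u ξ j * θ j| ≤ b * R := by
    rw [abs_mul, abs_of_pos (hθ0 j)]
    exact mul_le_mul hj (hθ j).2 (hθ0 j).le hb0
  have h2 : |offset u ξ 2 * θ 2| ≤ 3 * R * b := by
    calc |offset u ξ 2 * θ 2|
        = |offset u ξ 0 * θ 0 + offset u ξ 1 * θ 1 - signedDot (offset u ξ) θ| := by
          rw [signedDot]; ring_nf
      _ ≤ b * R + b * R + d := (abs_add_sub_le _ _ _).trans (by gcongr <;> exact hmul ‹_›)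
      _ ≤ 3 * R * b := by nlinarith
  have h2' : |offset u ξ 2| ≤ 3 * R ^ 2 * b := by
    rw [abs_mul, abs_of_pos (hθ0 2)] at h2
    calc |offset u ξ 2| = |offset u ξ 2| * R⁻¹ * R := by field_simp
      _ ≤ |offset u ξ 2| * θ 2 * R := by gcongr; exact (hθ 2).1
      _ ≤ 3 * R * b * R := by gcongr
      _ = 3 * R ^ 2 * b := by ring
  fin_cases j
  exacts [h0.trans hbR, h1.trans hbR, h2']

end Plank

section PlankDual

/-- The plank polar to the cell of side `1 / (N σ)` at the point `t` of the surface
`powDefect p t = 0`, on which `(t · ^ (p - 1), 1)` is the normal direction; its proportions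
`σ ^ 2 N : σ : 1 / N` are those for which `N (s₀ ξ₀ + s₁ ξ₁ - s₂ ξ₂ - ξ₃) = O(c)` for all `s` in
the cell. -/
def dualPlank (p c N σ : ℝ) (t : Fin 3 → ℝ) : Set (Fin 4 → ℝ) :=
  plank t (t · ^ (p - 1)) (c * σ ^ 2 * N) (c * σ) (c / N)

variable {p c N σ : ℝ} {t : Fin 3 → ℝ}

lemma neg_mem_dualPlank {ξ : Fin 4 → ℝ} (hξ : ξ ∈ dualPlank p c N σ t) :
    -ξ ∈ dualPlank p c N σ t :=
  neg_mem_plank hξ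

lemma sub_mem_dualPlank {c' : ℝ} (hc : c + c ≤ c') (hN : 0 < N) (hσ : 0 < σ) {ξ ζ : Fin 4 → ℝ}
    (hξ : ξ ∈ dualPlank p c N σ t) (hζ : ζ ∈ dualPlank p c N σ t) :
    ξ - ζ ∈ dualPlank p c' N σ t := by
  refine plank_mono ?_ ?_ ?_ (sub_mem_plank hξ hζ)
  · rw [← add_mul, ← add_mul]; gcongr
  · rw [← add_mul]; gcongr
  · rw [← add_div]; gcongr

lemma volume_dualPlank (hc : 0 ≤ c) (hN : 0 < N) (hσ : 0 ≤ σ) (ht : 0 < t 2) :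
    volume (dualPlank p c N σ t) = ENNReal.ofReal (16 * c ^ 4 * σ ^ 4 / t 2) := by
  rw [dualPlank, volume_plank _ ht (by positivity) (by positivity) (by positivity)]
  congr 2
  field_simp

lemma exists_abs_sub_two_le_powDefect {k R : ℝ} (hk : 0 < k) (hR : 1 ≤ R) :
    ∃ K ≥ 0, ∀ t s : Fin 3 → ℝ, (∀ j, t j ∈ Set.Icc R⁻¹ R) → (∀ j, s j ∈ Set.Icc R⁻¹ R) →
      |s 2 - t 2| ≤ K * (|s 0 - t 0| + |s 1 - t 1| + |powDefect k s| + |powDefect k t|) := by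
  have hlo : 0 < R⁻¹ := by positivity
  obtain ⟨L, hL0, hL⟩ := exists_abs_rpow_sub_rpow_le k R hlo
  obtain ⟨L', hL'0, hL'⟩ := exists_abs_sub_le_rpow_sub_rpow R hk hlo
  refine ⟨L' * (L + 1), by positivity, fun t s ht hs => ?_⟩
  have h2 : s 2 ^ k - t 2 ^ k = (s 0 ^ k - t 0 ^ k) + (s 1 ^ k - t 1 ^ k)
      - (powDefect k s - powDefect k t) := by simp only [powDefect]; ring
  rw [mul_assoc]
  refine (hL' _ (ht 2) _ (hs 2)).trans (mul_le_mul_of_nonneg_left ?_ hL'0)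
  calc |s 2 ^ k - t 2 ^ k|
      ≤ |s 0 ^ k - t 0 ^ k| + |s 1 ^ k - t 1 ^ k| + |powDefect k s - powDefect k t| := by
        rw [h2]; exact abs_add_sub_le _ _ _
    _ ≤ L * |s 0 - t 0| + L * |s 1 - t 1| + (|powDefect k s| + |powDefect k t|) :=
        add_le_add (add_le_add (hL _ (ht 0) _ (hs 0)) (hL _ (ht 1) _ (hs 1))) (abs_sub _ _)
    _ ≤ (L + 1) * (|s 0 - t 0| + |s 1 - t 1| + |powDefect k s| + |powDefect k t|) := by
        have hL_mul : 0 ≤ L * (|powDefect k s| + |powDefect k t|) := by positivity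
        linarith [abs_nonneg (s 0 - t 0), abs_nonneg (s 1 - t 1)]

lemma exists_abs_signedDot_sub_le (k : ℝ) {R : ℝ} (hR : 1 ≤ R) :
    ∃ K ≥ 0, ∀ t s : Fin 3 → ℝ, (∀ j, t j ∈ Set.Icc R⁻¹ R) → (∀ j, s j ∈ Set.Icc R⁻¹ R) →
      ∀ w, (∀ j, |s j - t j| ≤ w) →
        |k * signedDot (s - t) (t · ^ (k - 1))| ≤
          |powDefect k s| + |powDefect k t| + K * w ^ 2 := by
  obtain ⟨Q, hQ0, hQ⟩ := exists_rpow_taylor_two k R (by positivity : 0 < R⁻¹)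
  refine ⟨3 * Q, by positivity, fun t s ht hs w hw => ?_⟩
  let rem (j : Fin 3) : ℝ := s j ^ k - t j ^ k - k * t j ^ (k - 1) * (s j - t j)
  have hrem (j : Fin 3) : |rem j| ≤ Q * w ^ 2 :=
    (hQ _ (ht j) _ (hs j)).trans
      (mul_le_mul_of_nonneg_left (sq_le_sq.2 ((hw j).trans (le_abs_self w))) hQ0)
  have hexpand : k * signedDot (s - t) (t · ^ (k - 1)) =
      powDefect k s - powDefect k t - (rem 0 + rem 1 - rem 2) := by
    simp only [signedDot, powDefect, Pi.sub_apply, rem]; ring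
  calc |k * signedDot (s - t) (t · ^ (k - 1))|
      ≤ |powDefect k s| + |powDefect k t| + (|rem 0| + |rem 1| + |rem 2|) := by
        rw [hexpand]
        exact (abs_sub _ _).trans (add_le_add (abs_sub _ _) (abs_add_sub_le _ _ _))
    _ ≤ |powDefect k s| + |powDefect k t| + 3 * Q * w ^ 2 := by
        linarith [hrem 0, hrem 1, hrem 2]

lemma signedDot_rpow_sub_one {k : ℝ} {t : Fin 3 → ℝ} (ht : ∀ j, 0 < t j) :
    signedDot t (t · ^ (k - 1)) = powDefect k t + 1 := by
  have hmul (j : Fin 3) : t j * t j ^ (k - 1) = t j ^ k := by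
    rw [mul_comm, ← rpow_add_one (ht j).ne', sub_add_cancel]
  simp only [signedDot, powDefect, hmul]; ring

lemma signedDot_sub_last_eq {k : ℝ} {t : Fin 3 → ℝ} (ht : ∀ j, 0 < t j) (s : Fin 3 → ℝ)
    (ξ : Fin 4 → ℝ) :
    s 0 * ξ 0 + s 1 * ξ 1 - s 2 * ξ 2 - ξ 3 =
      ξ 3 * powDefect k t + ξ 3 * signedDot (s - t) (t · ^ (k - 1))
        + signedDot (offset (t · ^ (k - 1)) ξ) t
        + signedDot (s - t) (offset (t · ^ (k - 1)) ξ) := by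
  rw [eq_sub_of_add_eq (signedDot_rpow_sub_one (k := k) ht).symm]
  simp only [signedDot, offset, Pi.sub_apply, Fin.castSucc_zero, Fin.castSucc_one,
    show (2 : Fin 3).castSucc = 2 from rfl]
  ring

lemma exists_abs_sub_le_and_tangent {k R : ℝ} (hk : 1 ≤ k) (hR : 1 ≤ R) :
    ∃ M ≥ 1, ∀ w ≤ (1 : ℝ), ∀ t s : Fin 3 → ℝ,
      (∀ j, t j ∈ Set.Icc R⁻¹ R) → (∀ j, s j ∈ Set.Icc R⁻¹ R) →
      |powDefect k t| ≤ w ^ 2 → |powDefect k s| ≤ w ^ 2 → |s 0 - t 0| ≤ w → |s 1 - t 1| ≤ w →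
      (∀ j, |s j - t j| ≤ M * w) ∧ |signedDot (s - t) (t · ^ (k - 1))| ≤ M * w ^ 2 := by
  have hk0 : 0 < k := one_pos.trans_le hk
  obtain ⟨L, hL0, hL⟩ := exists_abs_sub_two_le_powDefect hk0 hR
  obtain ⟨K, hK0, hK⟩ := exists_abs_signedDot_sub_le k hR
  let M := 4 * L + 1
  have hM1 : 1 ≤ M := by simp only [M]; linarith
  refine ⟨M + 2 + K * M ^ 2, by linarith [show 0 ≤ K * M ^ 2 by positivity], ?_⟩
  intro w hw t s ht hs hdt hds h0 h1
  have hw0 : 0 ≤ w := (abs_nonneg _).trans h0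
  have hMw : w ≤ M * w := le_mul_of_one_le_left hw0 hM1
  have hww : w ^ 2 ≤ w := pow_le_of_le_one hw0 hw two_ne_zero
  have h2 : |s 2 - t 2| ≤ M * w := calc
    |s 2 - t 2| ≤ L * (w + w + w + w) := (hL t s ht hs).trans (by gcongr <;> linarith)
    _ ≤ M * w := by simp only [M]; linarith
  have hdiff : ∀ j, |s j - t j| ≤ M * w := by
    intro j
    fin_cases j
    exacts [h0.trans hMw, h1.trans hMw, h2]
  refine ⟨fun j => (hdiff j).trans ?_, ?_⟩
  · gcongr; linarith [show 0 ≤ K * M ^ 2 by positivity]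
  calc |signedDot (s - t) (t · ^ (k - 1))| ≤ |k * signedDot (s - t) (t · ^ (k - 1))| := by
        rw [abs_mul, abs_of_pos hk0]; exact le_mul_of_one_le_left (abs_nonneg _) hk
    _ ≤ w ^ 2 + w ^ 2 + K * (M * w) ^ 2 := (hK t s ht hs _ hdiff).trans (by gcongr)
    _ = (2 + K * M ^ 2) * w ^ 2 := by ring
    _ ≤ (M + 2 + K * M ^ 2) * w ^ 2 := by gcongr; linarith

lemma exists_abs_le_on_plank_of_same_cell {k R : ℝ} (hk : 1 ≤ k) (hR : 1 ≤ R) :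
    ∃ c > 0, c ≤ 1 / 2 ∧ ∀ N σ : ℝ, 0 < N → 0 < σ → σ ≤ 1 → 1 ≤ N * σ → ∀ t s : Fin 3 → ℝ,
      (∀ j, t j ∈ Set.Icc R⁻¹ R) → (∀ j, s j ∈ Set.Icc R⁻¹ R) →
      |powDefect k t| ≤ 1 / N ^ 2 → |powDefect k s| ≤ 1 / N ^ 2 →
      |s 0 - t 0| ≤ 1 / (N * σ) → |s 1 - t 1| ≤ 1 / (N * σ) →
      ∀ ξ ∈ dualPlank k c N σ t,
        |s 0 * ξ 0 + s 1 * ξ 1 - s 2 * ξ 2 - ξ 3| ≤ 1 / (16 * N) := by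
  obtain ⟨M, hM1, hM⟩ := exists_abs_sub_le_and_tangent hk hR
  let D := 2 + M + 9 * M * R ^ 2
  have hD : 1 ≤ D := by simp only [D]; linarith [show 0 ≤ M * R ^ 2 by positivity]
  refine ⟨1 / (16 * D), by positivity, one_div_le_one_div_of_le two_pos (by linarith), ?_⟩
  intro N σ hN hσ hσ1 hNσ t s ht hs hdt hds h0 h1 ξ hξ
  generalize hc : 1 / (16 * D) = c at hξ
  have hc0 : 0 < c := hc ▸ by positivity
  obtain ⟨w, hw⟩ : ∃ w, w = 1 / (N * σ) := ⟨_, rfl⟩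
  rw [← hw] at h0 h1
  have hw1 : w ≤ 1 := hw ▸ div_le_one_of_le₀ hNσ (by positivity)
  have hNw : 1 / N ^ 2 ≤ w ^ 2 := by
    rw [hw, div_pow, one_pow]
    exact one_div_le_one_div_of_le (by positivity)
      (by gcongr; exact mul_le_of_le_one_right hN.le hσ1)
  obtain ⟨hdiff, htangent⟩ := hM w hw1 t s ht hs (hdt.trans hNw) (hds.trans hNw) h0 h1
  have hoffset := abs_offset_le hR ht (d := c / N) (b := c * σ)
    (by rw [div_le_iff₀ hN, mul_assoc, mul_comm σ]; exact le_mul_of_one_le_right hc0.le hNσ) hξ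
  obtain ⟨h3, -, -, hthick⟩ := hξ
  have hpos (j : Fin 3) : 0 < t j := (inv_pos.2 (one_pos.trans_le hR)).trans_le (ht j).1
  have hlength : c * σ ^ 2 * N * w ^ 2 = c / N := by rw [hw]; field_simp
  have hwidth : w * (c * σ) = c / N := by rw [hw]; field_simp
  have hcross := abs_signedDot_le (a := s - t) hdiff hoffset
  rw [signedDot_sub_last_eq (k := k) hpos]
  calc _ ≤ |ξ 3| * |powDefect k t| + |ξ 3| * |signedDot (s - t) (t · ^ (k - 1))|
        + |signedDot (offset (t · ^ (k - 1)) ξ) t|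
        + |signedDot (s - t) (offset (t · ^ (k - 1)) ξ)| := by
        rw [← abs_mul, ← abs_mul]
        exact (abs_add_le _ _).trans (by gcongr; exact abs_add_three _ _ _)
    _ ≤ c * σ ^ 2 * N * w ^ 2 + c * σ ^ 2 * N * (M * w ^ 2) + c / N
        + 3 * (M * w * (3 * R ^ 2 * (c * σ))) := by
        gcongr; exact hdt.trans hNw
    _ = D * (c / N) := by
        simp only [D]; linear_combination (1 + M) * hlength + 9 * M * R ^ 2 * hwidth
    _ = 1 / (16 * N) := by rw [← hc]; field_simp

lemma powSum_eq_powDefect_add {p q : ℝ} {t : Fin 3 → ℝ} {ξ : Fin 4 → ℝ} (h3 : 0 < ξ 3) :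
    ξ 0 ^ q + ξ 1 ^ q - ξ 2 ^ q - ξ 3 ^ q =
      ξ 3 ^ (q - 2) * (ξ 3 ^ 2 * powDefect p t)
        + ξ 3 ^ (q - 2) * (q * ξ 3 * signedDot (offset (t · ^ (p - 1)) ξ) t)
        + signedDot (fun j => ξ j.castSucc ^ q - ξ 3 ^ q * t j ^ p
            - q * ξ 3 ^ (q - 1) * t j * offset (t · ^ (p - 1)) ξ j) 1 := by
  have hsq : ξ 3 ^ q = ξ 3 ^ (q - 2) * ξ 3 ^ 2 := by
    rw [← rpow_natCast, ← rpow_add h3]; norm_num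
  have hone : ξ 3 ^ (q - 1) = ξ 3 ^ (q - 2) * ξ 3 := by
    rw [← rpow_add_one h3.ne']; ring_nf
  simp only [powDefect, signedDot, Pi.one_apply, hone, hsq, Fin.castSucc_zero, Fin.castSucc_one,
    show (2 : Fin 3).castSucc = 2 from rfl]
  ring

lemma exists_rpow_taylor_two_conjugate {p q : ℝ} (hpq : p.HolderConjugate q) {R : ℝ}
    (hR : 1 ≤ R) :
    ∃ ρ > 0, ∃ Q ≥ 0, ∀ t ∈ Set.Icc R⁻¹ R, ∀ z ≥ (1 : ℝ), ∀ w ≤ ρ, ∀ x : ℝ,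
      |x - z * t ^ (p - 1)| ≤ w →
        0 < x ∧ |x ^ q - z ^ q * t ^ p - q * z ^ (q - 1) * t * (x - z * t ^ (p - 1))|
          ≤ z ^ (q - 2) * (Q * w ^ 2) := by
  have hR0 : 0 < R⁻¹ := by positivity
  have hp1 : 0 ≤ p - 1 := hpq.sub_one_pos.le
  have hlo : 0 < R⁻¹ ^ (p - 1) := rpow_pos_of_pos hR0 _
  obtain ⟨Q, hQ0, hQ⟩ := exists_rpow_taylor_two_homogeneous q (R ^ (p - 1)) hlo
  refine ⟨R⁻¹ ^ (p - 1) / 2, by positivity, Q, hQ0, fun t ht z hz w hw x hx => ?_⟩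
  have ht0 : 0 ≤ t := hR0.le.trans ht.1
  obtain ⟨hpos, hle⟩ := hQ (t ^ (p - 1)) ⟨rpow_le_rpow hR0.le ht.1 hp1, rpow_le_rpow ht0 ht.2 hp1⟩
    z hz x (hx.trans hw)
  rw [← rpow_mul ht0, ← rpow_mul ht0, hpq.sub_one_mul_conj, mul_sub_one, hpq.sub_one_mul_conj,
    sub_sub_cancel, rpow_one] at hle
  refine ⟨hpos, hle.trans ?_⟩
  rw [mul_comm Q, mul_assoc]
  exact mul_le_mul_of_nonneg_left
    (mul_le_mul_of_nonneg_left (sq_le_sq' (abs_le.1 hx).1 (abs_le.1 hx).2) hQ0) (by positivity)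

lemma dual_error_le_one {σ q B : ℝ} (hσ : 0 ≤ σ) (hq : 0 ≤ q) (hB : 0 ≤ B)
    (h : σ * (1 + q + B) ≤ 1) : (σ ^ 2) ^ 2 + q * σ ^ 2 + B * σ ^ 2 ≤ 1 := by
  have hσ1 : σ ≤ 1 := (le_mul_of_one_le_right hσ (by linarith)).trans h
  have hσ4 : (σ ^ 2) ^ 2 ≤ σ ^ 2 :=
    pow_le_of_le_one (by positivity) (pow_le_one₀ hσ hσ1) two_ne_zero
  calc _ ≤ σ ^ 2 + q * σ ^ 2 + B * σ ^ 2 := by gcongr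
    _ = σ * (σ * (1 + q + B)) := by ring
    _ ≤ 1 := mul_le_one₀ hσ1 (by positivity) h

lemma exists_dual_powSum_le_on_plank {p q R : ℝ} (hpq : p.HolderConjugate q) (hR : 1 ≤ R) :
    ∃ σ₀ > 0, ∀ N σ : ℝ, 0 < N → 0 < σ → σ ≤ σ₀ → 1 ≤ N * σ → ∀ t : Fin 3 → ℝ,
      (∀ j, t j ∈ Set.Icc R⁻¹ R) → |powDefect p t| ≤ 1 / N ^ 2 →
      ∀ ξ ∈ dualPlank p 1 N σ t, 1 ≤ ξ 3 →
        (∀ j : Fin 3, 0 < ξ j.castSucc) ∧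
          |ξ 0 ^ q + ξ 1 ^ q - ξ 2 ^ q - ξ 3 ^ q| ≤ ξ 3 ^ (q - 2) := by
  have hq0 : 0 < q := hpq.symm.pos
  obtain ⟨ρ, hρ, Q, hQ0, hQ⟩ := exists_rpow_taylor_two_conjugate hpq hR
  let A := 3 * R ^ 2
  refine ⟨min (1 / (1 + q + 3 * Q * A ^ 2)) (ρ / A), by positivity, ?_⟩
  intro N σ hN hσ hσ₀ hNσ t ht hdt ξ hξ h3
  obtain ⟨hσE, hσA⟩ := le_min_iff.1 hσ₀
  rw [le_div_iff₀ (by positivity)] at hσE hσA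
  rw [dualPlank, one_mul, one_mul] at hξ
  have hoffset := abs_offset_le hR ht ((div_le_iff₀ hN).2 (by rwa [mul_comm] at hNσ)) hξ
  obtain ⟨h3le, -, -, hthick⟩ := hξ
  have hz0 : 0 < ξ 3 := one_pos.trans_le h3
  have hzN : ξ 3 * (1 / N) ≤ σ ^ 2 := by
    rw [mul_one_div, div_le_iff₀ hN]; exact (le_abs_self _).trans h3le
  have htaylor (j : Fin 3) := hQ _ (ht j) _ h3 (A * σ) (by rwa [mul_comm]) _ (hoffset j)
  refine ⟨fun j => (htaylor j).1, ?_⟩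
  have hzq : 0 < ξ 3 ^ (q - 2) := rpow_pos_of_pos hz0 _
  rw [powSum_eq_powDefect_add (p := p) (t := t) hz0]
  calc _ ≤ |ξ 3 ^ (q - 2) * (ξ 3 ^ 2 * powDefect p t)| + |ξ 3 ^ (q - 2) *
          (q * ξ 3 * signedDot (offset (t · ^ (p - 1)) ξ) t)|
        + 3 * (ξ 3 ^ (q - 2) * (Q * (A * σ) ^ 2) * 1) :=
        (abs_add_three _ _ _).trans
          (by gcongr; exact abs_signedDot_le (fun j => (htaylor j).2) (fun j => by simp))
    _ ≤ ξ 3 ^ (q - 2) * (ξ 3 ^ 2 * (1 / N ^ 2)) + ξ 3 ^ (q - 2) * (q * ξ 3 * (1 / N))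
        + 3 * (ξ 3 ^ (q - 2) * (Q * (A * σ) ^ 2) * 1) := by
        simp only [abs_mul, abs_of_pos hzq, abs_of_pos hz0, abs_of_pos hq0, abs_pow]
        gcongr
    _ = ξ 3 ^ (q - 2) * ((ξ 3 * (1 / N)) ^ 2 + q * (ξ 3 * (1 / N)) + 3 * Q * A ^ 2 * σ ^ 2) := by
        ring
    _ ≤ ξ 3 ^ (q - 2) * ((σ ^ 2) ^ 2 + q * σ ^ 2 + 3 * Q * A ^ 2 * σ ^ 2) := by gcongr
    _ ≤ ξ 3 ^ (q - 2) * 1 := by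
        gcongr
        exact dual_error_le_one hσ.le hq0.le (by positivity) hσE
    _ = ξ 3 ^ (q - 2) := mul_one _

end PlankDual

/-! ### Counting cells -/

section Cells

lemma card_le_of_abs_sub_le {ι : Type*} [Fintype ι] {C : Finset (ι → ℤ)} {V : ℝ} (hV : 1 ≤ V)
    (hC : ∀ x ∈ C, ∀ y ∈ C, ∀ j, |(x j : ℝ) - y j| ≤ V) :
    (C.card : ℝ) ≤ (3 * V) ^ Fintype.card ι := by
  classical
  have hV0 : 0 ≤ ⌊V⌋ := Int.floor_nonneg.2 (zero_le_one.trans hV)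
  obtain rfl | ⟨y, hy⟩ := C.eq_empty_or_nonempty
  · rw [Finset.card_empty, Nat.cast_zero]; positivity
  have hsub : C ⊆ Fintype.piFinset fun j => Finset.Icc (y j - ⌊V⌋) (y j + ⌊V⌋) := by
    intro x hx
    refine Fintype.mem_piFinset.2 fun j => Finset.mem_Icc.2 ?_
    have hxy : |x j - y j| ≤ ⌊V⌋ := Int.le_floor.2 (by exact_mod_cast hC x hx y hy j)
    constructor <;> linarith [abs_le.1 hxy]
  calc (C.card : ℝ) ≤ (∏ j, (Finset.Icc (y j - ⌊V⌋) (y j + ⌊V⌋)).card : ℕ) := by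
        rw [← Fintype.card_piFinset]; exact_mod_cast Finset.card_le_card hsub
    _ = (((2 * ⌊V⌋ + 1).toNat : ℕ) : ℝ) ^ Fintype.card ι := by
        simp only [Int.card_Icc, show ∀ a : ℤ, a + ⌊V⌋ + 1 - (a - ⌊V⌋) = 2 * ⌊V⌋ + 1 by intro; ring,
          Finset.prod_const, Finset.card_univ, Nat.cast_pow]
    _ ≤ (3 * V) ^ Fintype.card ι := by
        gcongr
        rw [← Int.cast_natCast, Int.toNat_of_nonneg (by linarith)]
        push_cast
        linarith [Int.floor_le V]

/-- The cell of side `1 / A` that contains the first two coordinates of `t`. -/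
noncomputable def cell (A : ℝ) (t : Fin 3 → ℝ) (j : Fin 2) : ℤ := ⌊A * t j.castSucc⌋

lemma abs_sub_le_of_cell_eq {A : ℝ} (hA : 0 < A) {t s : Fin 3 → ℝ} (h : cell A s = cell A t)
    (j : Fin 2) : |s j.castSucc - t j.castSucc| ≤ 1 / A := by
  have hlt := Int.abs_sub_lt_one_of_floor_eq_floor (congrFun h j)
  rw [← mul_sub, abs_mul, abs_of_pos hA] at hlt
  rw [le_div_iff₀ hA, mul_comm]
  exact hlt.le

lemma card_cells_le {A w : ℝ} (hA : 0 ≤ A) (hw : 1 ≤ A * w) {S : Set (Fin 3 → ℝ)}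
    (hS : ∀ t ∈ S, ∀ s ∈ S, ∀ j : Fin 2, |t j.castSucc - s j.castSucc| ≤ w)
    {C : Finset (Fin 2 → ℤ)} (hC : ∀ i ∈ C, ∃ t ∈ S, cell A t = i) :
    (C.card : ℝ) ≤ 36 * (A * w) ^ 2 := by
  have hsub : ∀ x ∈ C, ∀ y ∈ C, ∀ j, |(x j : ℝ) - y j| ≤ A * w + 1 := by
    intro x hx y hy j
    obtain ⟨t, ht, rfl⟩ := hC x hx
    obtain ⟨s, hs, rfl⟩ := hC y hy
    have hAw : |A * t j.castSucc - A * s j.castSucc| ≤ A * w := by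
      rw [← mul_sub, abs_mul, abs_of_nonneg hA]
      exact mul_le_mul_of_nonneg_left (hS t ht s hs j) hA
    rw [abs_le] at hAw ⊢
    have := Int.floor_le (A * t j.castSucc)
    have := Int.lt_floor_add_one (A * t j.castSucc)
    have := Int.floor_le (A * s j.castSucc)
    have := Int.lt_floor_add_one (A * s j.castSucc)
    simp only [cell]
    constructor <;> linarith
  calc (C.card : ℝ) ≤ (3 * (A * w + 1)) ^ 2 := by
        simpa using card_le_of_abs_sub_le (by linarith) hsub
    _ ≤ (3 * (A * w + A * w)) ^ 2 := by gcongr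
    _ = 36 * (A * w) ^ 2 := by ring

lemma exists_abs_sub_le_of_mem_dualPlank {p R : ℝ} (hp : 1 < p) (hR : 1 ≤ R) :
    ∃ K ≥ 0, ∀ (N σ : ℝ) (ξ : Fin 4 → ℝ), 0 < ξ 3 → ∀ t s : Fin 3 → ℝ,
      (∀ j, t j ∈ Set.Icc R⁻¹ R) → (∀ j, s j ∈ Set.Icc R⁻¹ R) →
      ξ ∈ dualPlank p 1 N σ t → ξ ∈ dualPlank p 1 N σ s →
      ∀ j : Fin 2, |t j.castSucc - s j.castSucc| ≤ K * (σ / ξ 3) := by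
  obtain ⟨K, hK0, hK⟩ := exists_abs_sub_le_rpow_sub_rpow R (sub_pos.2 hp)
    (by positivity : 0 < R⁻¹)
  refine ⟨2 * K, by positivity, fun N σ ξ h3 t s ht hs hξt hξs j => ?_⟩
  have hoffset {r : Fin 3 → ℝ} (hr : ξ ∈ dualPlank p 1 N σ r) :
      |offset (r · ^ (p - 1)) ξ j.castSucc| ≤ σ := by
    obtain ⟨-, h0, h1, -⟩ := hr
    rw [one_mul] at h0 h1
    fin_cases j
    exacts [h0, h1]
  have hmul : ξ 3 * (t j.castSucc ^ (p - 1) - s j.castSucc ^ (p - 1)) =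
      offset (s · ^ (p - 1)) ξ j.castSucc - offset (t · ^ (p - 1)) ξ j.castSucc := by
    simp only [offset]; ring
  calc |t j.castSucc - s j.castSucc|
      ≤ K * |t j.castSucc ^ (p - 1) - s j.castSucc ^ (p - 1)| := hK _ (hs _) _ (ht _)
    _ ≤ K * ((σ + σ) / ξ 3) := by
        gcongr
        rw [le_div_iff₀ h3, mul_comm, ← abs_of_pos h3, ← abs_mul, hmul]
        exact (abs_sub _ _).trans (add_le_add (hoffset hξs) (hoffset hξt))
    _ = 2 * K * (σ / ξ 3) := by ring

lemma exists_card_cells_dualPlank_le {p R : ℝ} (hp : 1 < p) (hR : 1 ≤ R) :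
    ∃ M ≥ 0, ∀ N σ : ℝ, 0 < N → 0 < σ → ∀ ξ : Fin 4 → ℝ, 0 < ξ 3 → ∀ C : Finset (Fin 2 → ℤ),
      (∀ i ∈ C, ∃ t ∈ {t | (∀ j, t j ∈ Set.Icc R⁻¹ R) ∧ ξ ∈ dualPlank p 1 N σ t},
        cell (N * σ) t = i) →
      (C.card : ℝ) ≤ M * (σ ^ 4 * N ^ 2 / ξ 3 ^ 2) := by
  obtain ⟨K, hK0, hK⟩ := exists_abs_sub_le_of_mem_dualPlank hp hR
  refine ⟨36 * (K + 1) ^ 2, by positivity, fun N σ hN hσ ξ h3 C hC => ?_⟩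
  obtain rfl | ⟨i, hi⟩ := C.eq_empty_or_nonempty
  · rw [Finset.card_empty, Nat.cast_zero]; positivity
  have hlength : 1 ≤ σ ^ 2 * N / ξ 3 := by
    obtain ⟨t, ⟨-, ht⟩, -⟩ := hC i hi
    rw [le_div_iff₀ h3, one_mul]
    simpa only [one_mul] using (le_abs_self _).trans ht.1
  have hsides : N * σ * ((K + 1) * (σ / ξ 3)) = (K + 1) * (σ ^ 2 * N / ξ 3) := by ring
  have hone : 1 ≤ N * σ * ((K + 1) * (σ / ξ 3)) :=
    hsides ▸ one_le_mul_of_one_le_of_one_le (by linarith) hlength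
  refine (card_cells_le (by positivity) hone (fun t ht s hs j => ?_) hC).trans
    (le_of_eq (by rw [hsides]; ring))
  refine (hK N σ ξ h3 t s ht.1 hs.1 ht.2 hs.2 j).trans ?_
  gcongr
  linarith

lemma card_le_mul_of_fibers_of_incidences {α β γ : Type*} [DecidableEq β] {P : Finset α}
    {f : α → β} {D : Finset γ} {r : α → γ → Prop} [∀ x y, Decidable (r x y)] {A B : ℝ} {w : γ → ℝ}
    (hA : 0 ≤ A) (hP : ((P.image f).card : ℝ) ≤ B)
    (hfiber : ∀ y ∈ P, ((P.filter fun x => f x = f y).card : ℝ) ≤ A * (1 + (D.filter (r y)).card))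
    (hincidence : ∀ h ∈ D, (((P.filter (r · h)).image f).card : ℝ) ≤ w h) :
    (P.card : ℝ) ≤ A * (B + ∑ h ∈ D, w h) := by
  obtain ⟨Y, hYP, hinj, himage⟩ := Finset.exists_subset_injOn_image_eq_of_surjOn
    (P : Set α) (P.image f) (by rw [Finset.coe_image]; exact Set.surjOn_image _ _)
  rw [Finset.coe_subset] at hYP
  have hswap : ∑ y ∈ Y, ((D.filter (r y)).card : ℝ) = ∑ h ∈ D, ((Y.filter (r · h)).card : ℝ) := by
    exact_mod_cast Finset.sum_card_bipartiteAbove_eq_sum_card_bipartiteBelow r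
  have hYh (h : γ) (hh : h ∈ D) : ((Y.filter (r · h)).card : ℝ) ≤ w h := by
    rw [← Finset.card_image_of_injOn (hinj.mono (Finset.coe_subset.2 (Finset.filter_subset _ _)))]
    refine le_trans ?_ (hincidence h hh)
    exact_mod_cast Finset.card_le_card
      (Finset.image_subset_image (Finset.filter_subset_filter _ hYP))
  calc (P.card : ℝ) = ∑ y ∈ Y, ((P.filter fun x => f x = f y).card : ℝ) := by
        have hcard := Finset.card_eq_sum_card_image f P
        rw [← himage, Finset.sum_image hinj] at hcard
        exact_mod_cast hcard
    _ ≤ ∑ y ∈ Y, A * (1 + (D.filter (r y)).card) :=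
        Finset.sum_le_sum fun y hy => hfiber y (hYP hy)
    _ = A * ((P.image f).card + ∑ h ∈ D, ((Y.filter (r · h)).card : ℝ)) := by
        rw [← Finset.mul_sum, Finset.sum_add_distrib, hswap, ← himage,
          Finset.card_image_of_injOn hinj, Finset.sum_const, nsmul_one]
    _ ≤ A * (B + ∑ h ∈ D, w h) := by
        gcongr with h hh
        exact hYh h hh

end Cells

/-! ### Near-solutions -/

section NearSolutions

/-- The first three coordinates of `x` divided by the last. -/
noncomputable def ratios (x : Fin 4 → ℤ) (j : Fin 3) : ℝ := x j.castSucc / x 3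

open Classical in
/-- The positive solutions of `|x₀ ^ k + x₁ ^ k - x₂ ^ k - x₃ ^ k| ≤ x₃ ^ (k - 2)` of dyadic height
`2 ^ n ≤ x₃ < 2 ^ (n + 1)`, with all coordinates comparable to `x₃`. The window for the ratios
widens as `n` decreases, which leaves room for the passage from a solution at height `2 ^ n` to
solutions of the dual inequality at lower heights. -/
noncomputable def nearSolutions (k r : ℝ) (n : ℕ) : Finset (Fin 4 → ℤ) :=
  (Finset.Icc 1 fun _ => ⌊exp (2 * r) * 2 ^ (n + 1)⌋).filter fun x =>
    2 ^ n ≤ x 3 ∧ x 3 < 2 ^ (n + 1) ∧ (∀ j, |log (ratios x j)| ≤ r * (1 + (1 / 2) ^ n)) ∧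
      |(x 0 : ℝ) ^ k + (x 1 : ℝ) ^ k - (x 2 : ℝ) ^ k - (x 3 : ℝ) ^ k| ≤ (x 3 : ℝ) ^ (k - 2)

variable {k r : ℝ} {n : ℕ} {x : Fin 4 → ℤ}

lemma mem_Icc_exp_of_abs_log_le {z : ℝ} (hz : 0 < z) (h : |log z| ≤ r) :
    z ∈ Set.Icc (exp r)⁻¹ (exp r) := by
  rw [← exp_neg]
  exact ⟨(le_log_iff_exp_le hz).1 (abs_le.1 h).1, (log_le_iff_le_exp hz).1 (abs_le.1 h).2⟩

lemma mul_one_add_half_pow_le (hr : 0 ≤ r) (n : ℕ) : r * (1 + (1 / 2) ^ n) ≤ 2 * r := by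
  have hhalf : (1 / 2 : ℝ) ^ n ≤ 1 := pow_le_one₀ (by norm_num) (by norm_num)
  nlinarith

lemma mem_nearSolutions (hr : 0 ≤ r) : x ∈ nearSolutions k r n ↔ (∀ j, 0 < x j) ∧
    2 ^ n ≤ x 3 ∧ x 3 < 2 ^ (n + 1) ∧ (∀ j, |log (ratios x j)| ≤ r * (1 + (1 / 2) ^ n)) ∧
      |(x 0 : ℝ) ^ k + (x 1 : ℝ) ^ k - (x 2 : ℝ) ^ k - (x 3 : ℝ) ^ k| ≤ (x 3 : ℝ) ^ (k - 2) := by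
  simp only [nearSolutions, Finset.mem_filter, Finset.mem_Icc, and_congr_left_iff, Pi.le_def]
  rintro ⟨-, hlt, hratios, -⟩
  refine ⟨fun h => h.1, fun hpos => ⟨hpos, Fin.lastCases ?_ fun j => ?_⟩⟩ <;> rw [Int.le_floor]
  · have hx3 : (x 3 : ℝ) ≤ 2 ^ (n + 1) := by exact_mod_cast hlt.le
    exact hx3.trans (le_mul_of_one_le_left (by positivity) (one_le_exp (by positivity)))
  · have hx3 : (0 : ℝ) < x 3 := by exact_mod_cast hpos 3
    have hxj : (0 : ℝ) < x j.castSucc := by exact_mod_cast hpos _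
    have hle := (mem_Icc_exp_of_abs_log_le (div_pos hxj hx3)
      ((hratios j).trans (mul_one_add_half_pow_le hr n))).2
    rw [div_le_iff₀ hx3] at hle
    refine hle.trans ?_
    gcongr
    exact_mod_cast hlt.le

lemma ratios_mem_Icc (hr : 0 ≤ r) (hx : x ∈ nearSolutions k r n) (j : Fin 3) :
    ratios x j ∈ Set.Icc (exp (2 * r))⁻¹ (exp (2 * r)) := by
  obtain ⟨hpos, -, -, hratios, -⟩ := (mem_nearSolutions hr).1 hx
  refine mem_Icc_exp_of_abs_log_le (div_pos ?_ ?_)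
    ((hratios j).trans (mul_one_add_half_pow_le hr n)) <;> exact_mod_cast hpos _

lemma abs_powDefect_ratios_le (hr : 0 ≤ r) (hx : x ∈ nearSolutions k r n) :
    |powDefect k (ratios x)| ≤ 1 / (2 ^ n) ^ 2 := by
  obtain ⟨hpos, hn, -, -, hdefect⟩ := (mem_nearSolutions hr).1 hx
  have hpos' (j : Fin 4) : (0 : ℝ) < x j := by exact_mod_cast hpos j
  have hk : 0 < (x 3 : ℝ) ^ k := rpow_pos_of_pos (hpos' 3) k
  have hdiv : powDefect k (ratios x) =
      ((x 0 : ℝ) ^ k + (x 1 : ℝ) ^ k - (x 2 : ℝ) ^ k - (x 3 : ℝ) ^ k) / (x 3 : ℝ) ^ k := by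
    simp only [powDefect, ratios, div_rpow (hpos' _).le (hpos' 3).le, Fin.castSucc_zero,
      Fin.castSucc_one, show (2 : Fin 3).castSucc = 2 from rfl]
    field_simp
  calc |powDefect k (ratios x)| ≤ (x 3 : ℝ) ^ (k - 2) / (x 3 : ℝ) ^ k := by
        rw [hdiv, abs_div, abs_of_pos hk]; gcongr
    _ = 1 / (x 3 : ℝ) ^ 2 := by
        rw [rpow_sub (hpos' 3), rpow_two]; field_simp
    _ ≤ 1 / (2 ^ n) ^ 2 := by gcongr; exact_mod_cast hn

lemma card_nearSolutions_le (k r : ℝ) (n : ℕ) :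
    ((nearSolutions k r n).card : ℝ) ≤ (exp (2 * r) * 2 ^ (n + 1)) ^ 4 := by
  have hnonneg : 0 ≤ ⌊exp (2 * r) * 2 ^ (n + 1)⌋ := Int.floor_nonneg.2 (by positivity)
  calc ((nearSolutions k r n).card : ℝ)
      ≤ ((Finset.Icc (1 : Fin 4 → ℤ) fun _ => ⌊exp (2 * r) * 2 ^ (n + 1)⌋).card : ℝ) := by
        exact Nat.cast_le.2 (Finset.card_filter_le _ _)
    _ = (⌊exp (2 * r) * 2 ^ (n + 1)⌋ : ℝ) ^ 4 := by
        rw [Pi.card_Icc]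
        simp [← Int.cast_natCast (R := ℝ), Int.toNat_of_nonneg hnonneg]
    _ ≤ (exp (2 * r) * 2 ^ (n + 1)) ^ 4 := by
        gcongr
        exact Int.floor_le _

lemma pairwiseDisjoint_nearSolutions (k r : ℝ) :
    Pairwise fun m n => Disjoint (nearSolutions k r m) (nearSolutions k r n) := by
  rw [pairwise_disjoint_on]
  refine fun m n hmn => Finset.disjoint_left.2 fun x hx hx' => ?_
  have hlt : x 3 < 2 ^ (m + 1) := (Finset.mem_filter.1 hx).2.2.1
  have hle : 2 ^ n ≤ x 3 := (Finset.mem_filter.1 hx').2.1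
  exact (hlt.trans_le (pow_le_pow_right₀ one_le_two hmn)).not_ge hle

lemma abs_log_le_two_mul {z : ℝ} (hz : |z - 1| ≤ 1 / 2) : |log z| ≤ 2 * |z - 1| := by
  have hz0 : 1 / 2 ≤ z := by linarith [(abs_le.1 hz).1]
  have hzpos : 0 < z := by linarith
  have hupper := log_le_sub_one_of_pos hzpos
  have hlower := one_sub_inv_le_log_of_pos hzpos
  have hinv : |1 - z⁻¹| ≤ 2 * |z - 1| := by
    rw [show 1 - z⁻¹ = (z - 1) * z⁻¹ by field_simp, abs_mul, abs_of_pos (inv_pos.2 hzpos), mul_comm]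
    gcongr
    exact inv_le_of_inv_le₀ two_pos (by linarith)
  rw [abs_le]
  constructor <;> linarith [abs_le.1 hinv, le_abs_self (z - 1), abs_nonneg (z - 1)]

lemma abs_log_div_le {m : ℕ} {D u a h : ℝ} (hr : 0 < r) (hmn : m < n) (hu : 0 < u)
    (hlog : |log u| ≤ r * (1 + (1 / 2) ^ n)) (hh : 2 ^ m ≤ h) (ha : |a - h * u| ≤ D)
    (hD : D ≤ exp (-(2 * r)) * min (r / 4) (1 / 2)) :
    |log (a / h)| ≤ r * (1 + (1 / 2) ^ m) := by
  have h0 : 0 < h := lt_of_lt_of_le (by positivity) hh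
  have hu_lower : exp (-(2 * r)) ≤ u := by
    rw [exp_neg]
    exact (mem_Icc_exp_of_abs_log_le hu (hlog.trans (mul_one_add_half_pow_le hr.le n))).1
  have hratio : |a / (h * u) - 1| ≤ min (r / 4) (1 / 2) * (1 / 2) ^ m := by
    rw [div_sub_one (by positivity), abs_div, abs_of_pos (mul_pos h0 hu),
      div_le_iff₀ (by positivity)]
    calc |a - h * u| ≤ exp (-(2 * r)) * min (r / 4) (1 / 2) := ha.trans hD
      _ = min (r / 4) (1 / 2) * (1 / 2) ^ m * (2 ^ m * exp (-(2 * r))) := by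
          rw [one_div_pow]; field_simp
      _ ≤ min (r / 4) (1 / 2) * (1 / 2) ^ m * (h * u) := by gcongr
  have hhalf : (1 / 2 : ℝ) ^ m ≤ 1 := pow_le_one₀ (by norm_num) (by norm_num)
  have hratio_half : |a / (h * u) - 1| ≤ 1 / 2 :=
    hratio.trans ((mul_le_of_le_one_right (by positivity) hhalf).trans (min_le_right _ _))
  have hratio_pos : 0 < a / (h * u) := by linarith [(abs_le.1 hratio_half).1]
  have hsucc : (1 / 2 : ℝ) ^ n ≤ (1 / 2) ^ (m + 1) :=
    pow_le_pow_of_le_one (by norm_num) (by norm_num) hmn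
  calc |log (a / h)| = |log (a / (h * u)) + log u| := by
        rw [← log_mul hratio_pos.ne' hu.ne']; congr 2; field_simp
    _ ≤ 2 * (r / 4 * (1 / 2) ^ m) + r * (1 + (1 / 2) ^ (m + 1)) := by
        refine (abs_add_le _ _).trans (add_le_add ?_ (hlog.trans (by gcongr)))
        refine (abs_log_le_two_mul hratio_half).trans ?_
        gcongr
        exact hratio.trans (by gcongr; exact min_le_left _ _)
    _ = r * (1 + (1 / 2) ^ m) := by ring

end NearSolutions

/-! ### Duality between near-solutions for conjugate exponents -/

section Recursion

variable {p q r : ℝ} {n L : ℕ} {x h : Fin 4 → ℤ}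

/-- The lattice point `h` lies in the plank dual to the cell of side `2 ^ (L - n)` around `x`. -/
def Incident (p : ℝ) (n L : ℕ) (x h : Fin 4 → ℤ) : Prop :=
  (fun j => (h j : ℝ)) ∈ dualPlank p 1 (2 ^ n) ((1 / 2) ^ L) (ratios x)

lemma one_le_two_pow_mul_half_pow (hn : L ≤ n) : (1 : ℝ) ≤ 2 ^ n * (1 / 2) ^ L := by
  rw [one_div_pow, mul_one_div, one_le_div (by positivity)]
  exact pow_le_pow_right₀ one_le_two hn

lemma Incident.neg (hh : Incident p n L x h) : Incident p n L x (-h) := by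
  rw [Incident]
  convert neg_mem_dualPlank hh using 1
  ext j
  exact Int.cast_neg _

lemma Incident.abs_offset_le {R : ℝ} (hR : 1 ≤ R) (hx : ∀ j, ratios x j ∈ Set.Icc R⁻¹ R)
    (hn : L ≤ n) (hh : Incident p n L x h) (j : Fin 3) :
    |offset (ratios x · ^ (p - 1)) (fun j => (h j : ℝ)) j| ≤ 3 * R ^ 2 * (1 / 2) ^ L := by
  have hthin : 1 / (2 : ℝ) ^ n ≤ 1 * (1 / 2) ^ L := by
    rw [div_le_iff₀ (by positivity), one_mul, mul_comm]
    exact one_le_two_pow_mul_half_pow hn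
  simpa only [one_mul] using _root_.abs_offset_le hR hx hthin hh j

lemma eq_zero_of_abs_offset_le {D : ℝ} {u : Fin 3 → ℝ} (hD : D < 1)
    (hoffset : ∀ j, |offset u (fun j => (h j : ℝ)) j| ≤ D) (h3 : h 3 = 0) : h = 0 := by
  refine funext (Fin.lastCases h3 fun j => Int.abs_lt_one_iff.1 ?_)
  have hlt := (hoffset j).trans_lt hD
  rw [offset, h3, Int.cast_zero, zero_mul, sub_zero] at hlt
  exact_mod_cast hlt

open Classical in
/-- The near-solutions with exponent `q` at the heights met by the planks dual to cells of side
`2 ^ (L - n)`, whose length is `2 ^ (n - 2 * L)`. -/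
noncomputable def dualSolutions (q r : ℝ) (n L : ℕ) : Finset (Fin 4 → ℤ) :=
  (Finset.range (n + 1 - 2 * L)).biUnion (nearSolutions q r)

lemma Incident.add_two_mul_le {m : ℕ} (hh : Incident p n L x h) (hm : (2 : ℝ) ^ m ≤ h 3) :
    m + 2 * L ≤ n := by
  have hlength : |(h 3 : ℝ)| ≤ 1 * ((1 / 2) ^ L) ^ 2 * 2 ^ n := hh.1
  refine (pow_le_pow_iff_right₀ (one_lt_two (α := ℝ))).1 ?_
  calc (2 : ℝ) ^ (m + 2 * L) = 2 ^ m * (2 ^ L) ^ 2 := by ring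
    _ ≤ 1 * ((1 / 2) ^ L) ^ 2 * 2 ^ n * (2 ^ L) ^ 2 := by
        gcongr
        exact hm.trans ((le_abs_self _).trans hlength)
    _ = 2 ^ n := by rw [one_div_pow]; field_simp

lemma Incident.mem_dualSolutions (hp : 1 < p) (hr : 0 < r) (hL : 1 ≤ L)
    (hx : x ∈ nearSolutions p r n) (hh : Incident p n L x h) (hpos : ∀ j, 0 < h j)
    (hsum : |(h 0 : ℝ) ^ q + (h 1 : ℝ) ^ q - (h 2 : ℝ) ^ q - (h 3 : ℝ) ^ q| ≤ (h 3 : ℝ) ^ (q - 2))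
    (hoffset : ∀ j, |offset (ratios x · ^ (p - 1)) (fun j => (h j : ℝ)) j| ≤
      exp (-(2 * ((p - 1) * r))) * min ((p - 1) * r / 4) (1 / 2)) :
    h ∈ dualSolutions q ((p - 1) * r) n L := by
  obtain ⟨m, hm, hm'⟩ := exists_nat_pow_near (show 1 ≤ h 3 from hpos 3) one_lt_two
  have hmn : m + 2 * L ≤ n := hh.add_two_mul_le (by exact_mod_cast hm)
  have hp1 : 0 < p - 1 := sub_pos.2 hp
  obtain ⟨hxpos, -, -, hratios, -⟩ := (mem_nearSolutions hr.le).1 hx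
  have hratio (j : Fin 3) : 0 < ratios x j := div_pos (by exact_mod_cast hxpos _)
    (by exact_mod_cast hxpos _)
  refine Finset.mem_biUnion.2 ⟨m, Finset.mem_range.2 (by omega),
    (mem_nearSolutions (by positivity)).2 ⟨hpos, hm, hm', fun j => ?_, hsum⟩⟩
  refine abs_log_div_le (by positivity) (by omega : m < n) (rpow_pos_of_pos (hratio j) (p - 1)) ?_
    (by exact_mod_cast hm) (hoffset j) le_rfl
  rw [log_rpow (hratio j), abs_mul, abs_of_pos hp1, mul_assoc]
  exact mul_le_mul_of_nonneg_left (hratios j) hp1.le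

lemma eventually_eq_zero_or_mem_dualSolutions (hpq : p.HolderConjugate q) (hr : 0 < r) :
    ∀ᶠ L in Filter.atTop, ∀ n ≥ L, ∀ x ∈ nearSolutions p r n, ∀ h, Incident p n L x h →
      (h 3 = 0 → h = 0) ∧ (0 < h 3 → h ∈ dualSolutions q ((p - 1) * r) n L) := by
  have hR : 1 ≤ exp (2 * r) := one_le_exp (by positivity)
  have hp1 := hpq.sub_one_pos
  obtain ⟨σ₀, hσ₀, hdual⟩ := exists_dual_powSum_le_on_plank hpq hR
  set D := exp (-(2 * ((p - 1) * r))) * min ((p - 1) * r / 4) (1 / 2)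
  have hD0 : 0 < D := by positivity
  have hD1 : D < 1 := by
    refine (mul_le_of_le_one_left (by positivity) (exp_le_one_iff.2 ?_)).trans_lt ?_
    · linarith [mul_pos hp1 hr]
    · exact (min_le_right _ _).trans_lt (by norm_num)
  have hσ : Filter.Tendsto (fun L : ℕ => (1 / 2 : ℝ) ^ L) Filter.atTop (nhds 0) :=
    tendsto_pow_atTop_nhds_zero_of_lt_one (by norm_num) (by norm_num)
  filter_upwards [Filter.eventually_ge_atTop 1, hσ.eventually_le_const hσ₀,
    hσ.eventually_le_const (div_pos hD0 (by positivity : 0 < 3 * exp (2 * r) ^ 2))]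
    with L hL hLσ hLD n hn x hx h hh
  have hoffset (j : Fin 3) := (hh.abs_offset_le hR (ratios_mem_Icc hr.le hx) hn j).trans
    ((le_div_iff₀' (by positivity)).1 hLD)
  refine ⟨eq_zero_of_abs_offset_le hD1 hoffset, fun h3 => ?_⟩
  obtain ⟨hpos, hsum⟩ := hdual (2 ^ n) ((1 / 2) ^ L) (by positivity) (by positivity) hLσ
    (one_le_two_pow_mul_half_pow hn) _ (ratios_mem_Icc hr.le hx) (abs_powDefect_ratios_le hr.le hx)
    _ hh (by exact_mod_cast h3)
  exact hh.mem_dualSolutions hpq.lt hr hL hx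
    (Fin.lastCases h3 fun j => by exact_mod_cast hpos j) hsum hoffset

/-- The coefficients of the linear form `x₀ ξ₀ + x₁ ξ₁ - x₂ ξ₂ - x₃ ξ₃`. -/
def flipSigns (x : Fin 4 → ℤ) : Fin 4 → ℤ := ![x 0, x 1, -x 2, -x 3]

lemma flipSigns_injective : Function.Injective flipSigns := by
  intro x y hxy
  simp only [flipSigns, Matrix.vecCons_inj, neg_inj] at hxy
  ext j
  fin_cases j
  exacts [hxy.1, hxy.2.1, hxy.2.2.1, hxy.2.2.2.1]

lemma sum_flipSigns_mul (hx : x 3 ≠ 0) (ξ : Fin 4 → ℝ) : ∑ j, (flipSigns x j : ℝ) * ξ j =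
    x 3 * (ratios x 0 * ξ 0 + ratios x 1 * ξ 1 - ratios x 2 * ξ 2 - ξ 3) := by
  have hx' : (x 3 : ℝ) ≠ 0 := Int.cast_ne_zero.2 hx
  simp only [Fin.sum_univ_four, flipSigns, ratios, Matrix.cons_val, Int.cast_neg,
    Fin.castSucc_zero, Fin.castSucc_one, show (2 : Fin 3).castSucc = 2 from rfl]
  field_simp
  ring

lemma card_insert_zero_union_image_neg_le {G : Type*} [AddGroup G] [DecidableEq G] (S : Finset G) :
    (insert 0 (S ∪ S.image (-·))).card ≤ 2 * (1 + S.card) := by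
  have := Finset.card_insert_le 0 (S ∪ S.image (-·))
  have := Finset.card_union_le S (S.image (-·))
  have := Finset.card_image_le (s := S) (f := (-·))
  omega

open Classical in
lemma eventually_mem_insert_zero_union_neg (hpq : p.HolderConjugate q) (hr : 0 < r) :
    ∀ᶠ L in Filter.atTop, ∀ n ≥ L, ∀ x ∈ nearSolutions p r n, ∀ h, Incident p n L x h →
      h ∈ insert 0 ((dualSolutions q ((p - 1) * r) n L).filter (Incident p n L x) ∪
        ((dualSolutions q ((p - 1) * r) n L).filter (Incident p n L x)).image (-·)) := by
  filter_upwards [eventually_eq_zero_or_mem_dualSolutions hpq hr] with L hL n hn x hx h hh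
  rcases lt_trichotomy (h 3) 0 with hneg | hzero | hpos
  · have hmem := (hL n hn x hx (-h) hh.neg).2 (neg_pos.2 hneg)
    exact Finset.mem_insert_of_mem (Finset.mem_union_right _ (Finset.mem_image.2
      ⟨-h, Finset.mem_filter.2 ⟨hmem, hh.neg⟩, neg_neg h⟩))
  · rw [(hL n hn x hx h hh).1 hzero]
    exact Finset.mem_insert_self _ _
  · exact Finset.mem_insert_of_mem (Finset.mem_union_left _
      (Finset.mem_filter.2 ⟨(hL n hn x hx h hh).2 hpos, hh⟩))

lemma exists_abs_sum_flipSigns_le (hp : 1 ≤ p) (hr : 0 ≤ r) :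
    ∃ c > 0, c ≤ 1 / 2 ∧ ∀ L, ∀ n ≥ L, ∀ x ∈ nearSolutions p r n, ∀ y ∈ nearSolutions p r n,
      cell (2 ^ n * (1 / 2) ^ L) (ratios x) = cell (2 ^ n * (1 / 2) ^ L) (ratios y) →
      ∀ ξ ∈ dualPlank p c (2 ^ n) ((1 / 2) ^ L) (ratios y),
        |∑ j, (flipSigns x j : ℝ) * ξ j| ≤ 1 / 8 := by
  obtain ⟨c, hc, hc', hplank⟩ :=
    exists_abs_le_on_plank_of_same_cell hp (one_le_exp (by positivity : 0 ≤ 2 * r))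
  refine ⟨c, hc, hc', fun L n hn x hx y hy hxy ξ hξ => ?_⟩
  obtain ⟨hpos, -, hlt, -⟩ := (mem_nearSolutions hr).1 hx
  have hcell := abs_sub_le_of_cell_eq (by positivity) hxy
  have hsmall := hplank (2 ^ n) ((1 / 2) ^ L) (by positivity) (by positivity)
    (pow_le_one₀ (by norm_num) (by norm_num)) (one_le_two_pow_mul_half_pow hn) (ratios y)
    (ratios x) (ratios_mem_Icc hr hy) (ratios_mem_Icc hr hx) (abs_powDefect_ratios_le hr hy)
    (abs_powDefect_ratios_le hr hx) (hcell 0) (hcell 1) ξ hξ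
  have hx3 : (0 : ℝ) ≤ x 3 := by exact_mod_cast (hpos 3).le
  have hx3' : (x 3 : ℝ) ≤ 2 ^ (n + 1) := by exact_mod_cast hlt.le
  rw [sum_flipSigns_mul (hpos 3).ne', abs_mul, abs_of_nonneg hx3]
  calc (x 3 : ℝ) * _ ≤ 2 ^ (n + 1) * (1 / (16 * 2 ^ n)) := by gcongr
    _ = 1 / 8 := by rw [pow_succ]; field_simp; norm_num

open Classical in
/-- The near-solutions whose ratios lie in the same cell of side `2 ^ (L - n)` as those of `y`. -/
noncomputable def sameCell (p r : ℝ) (n L : ℕ) (y : Fin 4 → ℤ) : Finset (Fin 4 → ℤ) :=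
  (nearSolutions p r n).filter fun x =>
    cell (2 ^ n * (1 / 2) ^ L) (ratios x) = cell (2 ^ n * (1 / 2) ^ L) (ratios y)

open Classical in
lemma exists_card_sameCell_mul_volume_le (hpq : p.HolderConjugate q) (hr : 0 < r) :
    ∃ c > 0, ∀ᶠ L in Filter.atTop, ∀ n ≥ L, ∀ y ∈ nearSolutions p r n,
      ((sameCell p r n L y).card : ENNReal) *
        volume (dualPlank p c (2 ^ n) ((1 / 2) ^ L) (ratios y)) ≤
          4 * (1 + ((dualSolutions q ((p - 1) * r) n L).filter (Incident p n L y)).card) := by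
  obtain ⟨c, hc, hc', hsum⟩ := exists_abs_sum_flipSigns_le hpq.lt.le hr.le
  refine ⟨c, hc, ?_⟩
  filter_upwards [eventually_mem_insert_zero_union_neg hpq hr] with L hL n hn y hy
  set S := (dualSolutions q ((p - 1) * r) n L).filter (Incident p n L y)
  calc _ = (((sameCell p r n L y).image flipSigns).card : ENNReal) *
        volume (dualPlank p c (2 ^ n) ((1 / 2) ^ L) (ratios y)) := by
        rw [Finset.card_image_of_injective _ flipSigns_injective]
    _ ≤ 2 * (insert 0 (S ∪ S.image (-·))).card := by
        refine card_mul_volume_le_of_near_dual (measurableSet_plank _ _ _ _ _)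
          (Finset.forall_mem_image.2 fun x hx ξ hξ => ?_) fun ξ hξ ζ hζ h hh => hL n hn y hy h ?_
        · obtain ⟨hx, hxy⟩ := Finset.mem_filter.1 hx
          exact hsum L n hn x hx y hy hxy ξ hξ
        · rw [Incident, ← hh]
          exact sub_mem_dualPlank (by linarith) (by positivity) (by positivity) hξ hζ
    _ ≤ 4 * (1 + S.card) := by
        norm_cast
        linarith [card_insert_zero_union_image_neg_le S]

open Classical in
lemma exists_card_sameCell_le (hpq : p.HolderConjugate q) (hr : 0 < r) :
    ∃ K ≥ 0, ∀ᶠ L in Filter.atTop, ∀ n ≥ L, ∀ y ∈ nearSolutions p r n,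
      ((sameCell p r n L y).card : ℝ) ≤ K / ((1 / 2) ^ L) ^ 4 *
        (1 + ((dualSolutions q ((p - 1) * r) n L).filter (Incident p n L y)).card) := by
  obtain ⟨c, hc, hvolume⟩ := exists_card_sameCell_mul_volume_le hpq hr
  refine ⟨exp (2 * r) / (4 * c ^ 4), by positivity, ?_⟩
  filter_upwards [hvolume] with L hL n hn y hy
  set S := (dualSolutions q ((p - 1) * r) n L).filter (Incident p n L y)
  have hy2 := ratios_mem_Icc hr.le hy 2
  have hy2' : 0 < ratios y 2 := (inv_pos.2 (exp_pos _)).trans_le hy2.1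
  have hmul : ((sameCell p r n L y).card : ℝ) *
      (16 * c ^ 4 * ((1 / 2) ^ L) ^ 4 / exp (2 * r)) ≤ 4 * (1 + S.card) :=
    calc _ ≤ ((sameCell p r n L y).card : ℝ) *
          (16 * c ^ 4 * ((1 / 2) ^ L) ^ 4 / ratios y 2) := by gcongr; exact hy2.2
      _ = (((sameCell p r n L y).card : ENNReal) *
          volume (dualPlank p c (2 ^ n) ((1 / 2) ^ L) (ratios y))).toReal := by
          rw [volume_dualPlank hc.le (by positivity) (by positivity) hy2', ENNReal.toReal_mul,
            ENNReal.toReal_natCast, ENNReal.toReal_ofReal (by positivity)]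
      _ ≤ (4 * (1 + S.card) : ENNReal).toReal := ENNReal.toReal_mono (by finiteness) (hL n hn y hy)
      _ = 4 * (1 + S.card) := by norm_cast
  rw [← le_div_iff₀ (by positivity)] at hmul
  refine hmul.trans_eq ?_
  field_simp
  norm_num

/-- The number of near-solutions at height `2 ^ n`, divided by `4 ^ n`. -/
noncomputable def density (k r : ℝ) (n : ℕ) : ℝ := (nearSolutions k r n).card / 4 ^ n

lemma density_nonneg (k r : ℝ) (n : ℕ) : 0 ≤ density k r n := by rw [density]; positivity

lemma sum_dualSolutions_inv_sq_le (q r : ℝ) (n L : ℕ) :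
    ∑ h ∈ dualSolutions q r n L, ((h 3 : ℝ) ^ 2)⁻¹ ≤
      ∑ m ∈ Finset.range (n + 1 - 2 * L), density q r m := by
  rw [dualSolutions, Finset.sum_biUnion ((pairwiseDisjoint_nearSolutions q r).set_pairwise _)]
  refine Finset.sum_le_sum fun m _ => ?_
  rw [density, div_eq_mul_inv, ← nsmul_eq_mul]
  refine Finset.sum_le_card_nsmul _ _ _ fun h hh => ?_
  have h3 : (2 : ℝ) ^ m ≤ h 3 := by exact_mod_cast (Finset.mem_filter.1 hh).2.1
  rw [show (4 : ℝ) ^ m = (2 ^ m) ^ 2 by rw [← pow_mul, mul_comm, pow_mul]; norm_num]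
  gcongr

open Classical in
lemma card_image_cell_ratios_le (hr : 0 ≤ r) (hn : L ≤ n) :
    (((nearSolutions p r n).image fun x => cell (2 ^ n * (1 / 2) ^ L) (ratios x)).card : ℝ) ≤
      36 * (2 ^ n * (1 / 2) ^ L * exp (2 * r)) ^ 2 := by
  have hR : 1 ≤ exp (2 * r) := one_le_exp (by positivity)
  refine card_cells_le (by positivity) (one_le_mul_of_one_le_of_one_le
    (one_le_two_pow_mul_half_pow hn) hR) (S := {t | ∀ j, t j ∈ Set.Icc 0 (exp (2 * r))})
    (fun t ht s hs j => ?_) (Finset.forall_mem_image.2 fun x hx => ⟨ratios x, fun j => ?_, rfl⟩)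
  · simpa only [sub_zero] using abs_sub_le_of_le_of_le (ht _).1 (ht _).2 (hs _).1 (hs _).2
  · have hj := ratios_mem_Icc hr hx j
    exact ⟨(inv_pos.2 (exp_pos _)).le.trans hj.1, hj.2⟩

open Classical in
lemma exists_card_image_cell_incident_le (hp : 1 < p) (hr : 0 ≤ r) :
    ∃ M ≥ 0, ∀ n L h, 0 < h 3 → ((((nearSolutions p r n).filter (Incident p n L · h)).image
      fun x => cell (2 ^ n * (1 / 2) ^ L) (ratios x)).card : ℝ) ≤
        M * (((1 / 2) ^ L) ^ 4 * (2 ^ n) ^ 2 / h 3 ^ 2) := by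
  obtain ⟨M, hM, hcells⟩ :=
    exists_card_cells_dualPlank_le hp (one_le_exp (by positivity : 0 ≤ 2 * r))
  refine ⟨M, hM, fun n L h h3 => hcells (2 ^ n) ((1 / 2) ^ L) (by positivity) (by positivity)
    (fun j => (h j : ℝ)) (by exact_mod_cast h3) _ (Finset.forall_mem_image.2 fun x hx => ?_)⟩
  obtain ⟨hx, hxh⟩ := Finset.mem_filter.1 hx
  exact ⟨ratios x, ⟨ratios_mem_Icc hr hx, hxh⟩, rfl⟩

lemma exists_card_nearSolutions_le_of_le (hpq : p.HolderConjugate q) (hr : 0 < r) :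
    ∃ K ≥ 0, ∃ M ≥ 0, ∀ᶠ L : ℕ in Filter.atTop, ∀ n ≥ L, ((nearSolutions p r n).card : ℝ) ≤
      K / ((1 / 2) ^ L) ^ 4 * (36 * (2 ^ n * (1 / 2) ^ L * exp (2 * r)) ^ 2 +
        M * (((1 / 2) ^ L) ^ 4 * (2 ^ n) ^ 2) *
          ∑ m ∈ Finset.range (n + 1 - 2 * L), density q ((p - 1) * r) m) := by
  classical
  obtain ⟨K, hK, hfiber⟩ := exists_card_sameCell_le hpq hr
  obtain ⟨M, hM, hcells⟩ := exists_card_image_cell_incident_le hpq.lt hr.le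
  refine ⟨K, hK, M, hM, ?_⟩
  filter_upwards [hfiber] with L hL n hn
  refine (card_le_mul_of_fibers_of_incidences (by positivity)
    (card_image_cell_ratios_le hr.le hn) (hL n hn) fun h hh => hcells n L h ?_).trans ?_
  · obtain ⟨m, -, hm⟩ := Finset.mem_biUnion.1 hh
    exact (pow_pos two_pos m).trans_le (Finset.mem_filter.1 hm).2.1
  · simp only [div_eq_mul_inv _ (((_ : ℤ) : ℝ) ^ 2), ← mul_assoc, ← Finset.mul_sum]
    gcongr
    exact sum_dualSolutions_inv_sq_le ..

lemma exists_density_le_of_le (hpq : p.HolderConjugate q) (hr : 0 < r) :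
    ∃ K : ℝ, ∀ᶠ L : ℕ in Filter.atTop, ∀ n ≥ L, density p r n ≤
      K * (4 ^ L + ∑ m ∈ Finset.range (n + 1 - 2 * L), density q ((p - 1) * r) m) := by
  obtain ⟨K, hK, M, hM, hcard⟩ := exists_card_nearSolutions_le_of_le hpq hr
  refine ⟨K * (36 * exp (2 * r) ^ 2 + M), ?_⟩
  filter_upwards [hcard] with L hL n hn
  replace hL := hL n hn
  have hZ : 0 ≤ ∑ m ∈ Finset.range (n + 1 - 2 * L), density q ((p - 1) * r) m :=
    Finset.sum_nonneg fun m _ => density_nonneg _ _ _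
  generalize ∑ m ∈ Finset.range (n + 1 - 2 * L), density q ((p - 1) * r) m = Z at hL hZ ⊢
  rw [density, div_le_iff₀ (by positivity)]
  calc _ ≤ _ := hL
    _ = K * (36 * exp (2 * r) ^ 2 * (2 ^ L) ^ 2 + M * Z) * (2 ^ n) ^ 2 := by
        rw [one_div_pow]; field_simp
    _ ≤ K * ((36 * exp (2 * r) ^ 2 + M) * ((2 ^ L) ^ 2 + Z)) * (2 ^ n) ^ 2 := by
        gcongr
        nlinarith [mul_nonneg hM (sq_nonneg (2 ^ L : ℝ)), mul_nonneg (sq_nonneg (exp (2 * r))) hZ]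
    _ = _ := by
        rw [← mul_assoc, ← pow_mul, ← pow_mul, mul_comm L, mul_comm n, pow_mul, pow_mul]
        norm_num

lemma exists_density_le (hpq : p.HolderConjugate q) (hr : 0 < r) :
    ∃ K ≥ 0, ∀ᶠ L : ℕ in Filter.atTop, ∀ n, density p r n ≤
      K * (4 ^ L + ∑ m ∈ Finset.range (n + 1 - 2 * L), density q ((p - 1) * r) m) := by
  obtain ⟨K, hlarge⟩ := exists_density_le_of_le hpq hr
  refine ⟨max K (16 * exp (2 * r) ^ 4), by positivity, ?_⟩
  filter_upwards [hlarge] with L hL n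
  have hZ : 0 ≤ ∑ m ∈ Finset.range (n + 1 - 2 * L), density q ((p - 1) * r) m :=
    Finset.sum_nonneg fun m _ => density_nonneg _ _ _
  obtain hn | hn := le_or_gt L n
  · exact (hL n hn).trans (by gcongr; exact le_max_left _ _)
  calc density p r n ≤ (exp (2 * r) * 2 ^ (n + 1)) ^ 4 / 4 ^ n := by
        rw [density]; gcongr; exact card_nearSolutions_le p r n
    _ = 16 * exp (2 * r) ^ 4 * 4 ^ n := by
        rw [div_eq_iff (by positivity), show (4 : ℝ) ^ n = (2 ^ n) ^ 2 by
          rw [← pow_mul, mul_comm, pow_mul]; norm_num]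
        ring
    _ ≤ _ := by
        gcongr
        · exact le_max_right _ _
        · calc (4 : ℝ) ^ n ≤ 4 ^ L := pow_le_pow_right₀ (by norm_num) hn.le
            _ ≤ _ := le_add_of_nonneg_right hZ

lemma exists_le_mul_pow_of_recursion {b : ℕ → ℝ} {K : ℝ} (hK : 0 ≤ K)
    (hb : ∀ᶠ L : ℕ in Filter.atTop, ∀ n, b n ≤
      K * (4 ^ L + ∑ m ∈ Finset.range (n + 1 - 2 * L), b m)) {ρ : ℝ} (hρ : 1 < ρ) :
    ∃ A ≥ 0, ∀ n, b n ≤ A * ρ ^ n := by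
  have hρ1 : 0 < ρ - 1 := sub_pos.2 hρ
  have hpow : Filter.Tendsto (fun L : ℕ => ρ ^ (2 * L)) Filter.atTop Filter.atTop :=
    (tendsto_pow_atTop_atTop_of_one_lt hρ).comp (Filter.tendsto_id.const_mul_atTop' two_pos)
  obtain ⟨L, hrec, hL, hLρ⟩ := (hb.and ((Filter.eventually_ge_atTop 1).and
    (hpow.eventually_ge_atTop (2 * K * ρ / (ρ - 1))))).exists
  rw [div_le_iff₀ hρ1] at hLρ
  refine ⟨2 * K * 4 ^ L, by positivity, fun n => ?_⟩
  induction n using Nat.strong_induction_on with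
  | _ n ih =>
  have hgeom : K * ∑ m ∈ Finset.range (n + 1 - 2 * L), ρ ^ m ≤ ρ ^ n / 2 := by
    obtain hn | hn := le_or_gt (2 * L) n
    · obtain ⟨j, rfl⟩ := Nat.exists_eq_add_of_le' hn
      rw [show j + 2 * L + 1 - 2 * L = j + 1 by omega, geom_sum_eq hρ.ne', ← mul_div_assoc,
        div_le_iff₀ hρ1]
      calc K * (ρ ^ (j + 1) - 1) ≤ K * ρ ^ (j + 1) := by gcongr; exact sub_le_self _ zero_le_one
        _ = ρ ^ j * (2 * K * ρ) / 2 := by ring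
        _ ≤ ρ ^ j * (ρ ^ (2 * L) * (ρ - 1)) / 2 := by gcongr
        _ = ρ ^ (j + 2 * L) / 2 * (ρ - 1) := by ring
    · rw [show n + 1 - 2 * L = 0 by omega, Finset.sum_range_zero, mul_zero]
      positivity
  calc b n ≤ K * (4 ^ L + ∑ m ∈ Finset.range (n + 1 - 2 * L), 2 * K * 4 ^ L * ρ ^ m) := by
        refine (hrec n).trans ?_
        gcongr with m hm
        exact ih m (by have := Finset.mem_range.1 hm; omega)
    _ = K * 4 ^ L + 2 * K * 4 ^ L * (K * ∑ m ∈ Finset.range (n + 1 - 2 * L), ρ ^ m) := by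
        rw [← Finset.mul_sum]; ring
    _ ≤ K * 4 ^ L * ρ ^ n + 2 * K * 4 ^ L * (ρ ^ n / 2) := by
        exact add_le_add (le_mul_of_one_le_right (by positivity) (one_le_pow₀ hρ.le)) (by gcongr)
    _ = 2 * K * 4 ^ L * ρ ^ n := by ring

lemma exists_density_le_mul_pow (hp : 1 < p) (hr : 0 < r) {ρ : ℝ} (hρ : 1 < ρ) :
    ∃ A ≥ 0, ∀ n, density p r n ≤ A * ρ ^ n := by
  have hpq := Real.HolderConjugate.conjExponent hp
  set q := p.conjExponent
  have hqr : (q - 1) * ((p - 1) * r) = r := by linear_combination r * hpq.mul_eq_add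
  obtain ⟨K, hK, hdensity⟩ := exists_density_le hpq hr
  obtain ⟨K', hK', hdensity'⟩ := exists_density_le hpq.symm (mul_pos hpq.sub_one_pos hr)
  rw [hqr] at hdensity'
  set b : ℕ → ℝ := fun n => density p r n + density q ((p - 1) * r) n
  have hrec : ∀ᶠ L : ℕ in Filter.atTop, ∀ n, b n ≤
      (K + K') * (4 ^ L + ∑ m ∈ Finset.range (n + 1 - 2 * L), b m) := by
    filter_upwards [hdensity, hdensity'] with L hL hL' n
    calc b n ≤ _ := add_le_add (hL n) (hL' n)
      _ ≤ K * (4 ^ L + ∑ m ∈ Finset.range (n + 1 - 2 * L), b m) +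
          K' * (4 ^ L + ∑ m ∈ Finset.range (n + 1 - 2 * L), b m) := by
        gcongr
        · exact le_add_of_nonneg_left (density_nonneg _ _ _)
        · exact le_add_of_nonneg_right (density_nonneg _ _ _)
      _ = _ := by ring
  obtain ⟨A, hA, hbound⟩ := exists_le_mul_pow_of_recursion (add_nonneg hK hK') hrec hρ
  exact ⟨A, hA, fun n => (le_add_of_nonneg_right (density_nonneg _ _ _)).trans (hbound n)⟩

end Recursion

/-! ### Mean squares of exponential sums -/

section MeanSquare

open FourierTransform SchwartzMap

lemma exists_bump_le_norm_fourier : ∃ φ : 𝓢(ℝ, ℂ), ∃ c > 0, (∀ v, ‖φ v‖ ≤ 1) ∧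
    (∀ v, 1 / 2 < |v| → φ v = 0) ∧ ∀ α, |α| ≤ 1 → c ≤ ‖𝓕 φ α‖ := by
  let b : ContDiffBump (0 : ℝ) := ⟨1 / 16, 1 / 8, by norm_num, by norm_num⟩
  have hsupp (v : ℝ) (hv : 1 / 8 ≤ |v|) : b v = 0 :=
    b.zero_of_le_dist (hv.trans_eq (by rw [dist_zero_right, norm_eq_abs]))
  let φ : 𝓢(ℝ, ℂ) := (b.hasCompactSupport.comp_left Complex.ofReal_zero).toSchwartzMap
    (Complex.ofRealCLM.contDiff.comp b.contDiff)
  have hφ (v : ℝ) : φ v = b v := rfl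
  refine ⟨φ, √2 / 2 * ∫ v, b v, mul_pos (by positivity) b.integral_pos, fun v => ?_,
    fun v hv => ?_, fun α hα => ?_⟩
  · rw [hφ, Complex.norm_real, norm_of_nonneg b.nonneg]; exact b.le_one
  · rw [hφ, hsupp v (by linarith), Complex.ofReal_zero]
  · have hInt : Integrable fun v => 𝐞 (-(v * α)) • φ v := by
      simpa [mul_comm] using (Real.fourierIntegral_convergent_iff α).2 φ.integrable
    have hre (v : ℝ) : √2 / 2 * b v ≤ RCLike.re (𝐞 (-(v * α)) • φ v) := by
      rw [Circle.smul_def, ← e_eq_fourierChar, hφ, smul_eq_mul, RCLike.re_eq_complex_re,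
        Complex.re_mul_ofReal]
      obtain hv | hv := le_or_gt (1 / 8) |v|
      · rw [hsupp v hv, mul_zero, mul_zero]
      · refine mul_le_mul_of_nonneg_right (half_sqrt_two_le_re_e ?_) b.nonneg
        rw [abs_neg, abs_mul]
        exact (mul_le_of_le_one_right (abs_nonneg v) hα).trans hv.le
    calc √2 / 2 * ∫ v, b v = ∫ v, √2 / 2 * b v := (integral_const_mul _ _).symm
      _ ≤ ∫ v, RCLike.re (𝐞 (-(v * α)) • φ v) :=
          integral_mono (b.integrable.const_mul _) hInt.re hre
      _ = (𝓕 φ α).re := by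
          rw [integral_re hInt, fourier_coe, Real.fourier_real_eq]; rfl
      _ ≤ ‖𝓕 φ α‖ := Complex.re_le_norm _

variable {ι : Type*}

lemma fourier_sum_smul_translate (φ : 𝓢(ℝ, ℂ)) (s : Finset ι) (w : ι → ℂ) (μ : ι → ℝ) (α : ℝ) :
    𝓕 (∑ i ∈ s, w i • φ.compSubConstCLM ℂ (-μ i)) α = (∑ i ∈ s, w i * e (μ i * α)) * 𝓕 φ α := by
  have htranslate (a : ℝ) : 𝓕 (φ.compSubConstCLM ℂ (-a)) α = e (a * α) * 𝓕 φ α := by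
    have hshift : ⇑(φ.compSubConstCLM ℂ (-a)) = φ ∘ fun v => v + a := by
      ext v
      rw [compSubConstCLM_apply, sub_neg_eq_add, Function.comp_apply]
    rw [fourier_coe, hshift, e_eq_fourierChar, ← smul_eq_mul, ← Circle.smul_def, mul_comm]
    exact congrFun (VectorFourier.fourierIntegral_comp_add_right 𝐞 volume (innerₗ ℝ) φ a) α
  simp only [fourier_sum, fourier_smul, sum_apply, smul_apply, htranslate, smul_eq_mul,
    Finset.sum_mul, mul_assoc]

lemma integrable_norm_sq (f : 𝓢(ℝ, ℂ)) : Integrable fun v => ‖f v‖ ^ 2 :=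
  (memLp_two_iff_integrable_sq_norm f.continuous.aestronglyMeasurable).1 (f.memLp 2)

lemma volume_real_Icc_inter_Icc_le (a b : ℝ) :
    volume.real (Set.Icc (a - 1 / 2) (a + 1 / 2) ∩ Set.Icc (b - 1 / 2) (b + 1 / 2)) ≤
      if |a - b| ≤ 1 then 1 else 0 := by
  split_ifs with hab
  · calc _ ≤ volume.real (Set.Icc (a - 1 / 2) (a + 1 / 2)) :=
          measureReal_mono Set.inter_subset_left measure_Icc_lt_top.ne
      _ = 1 := by rw [volume_real_Icc]; norm_num
  · rw [Set.disjoint_iff_inter_eq_empty.1, measureReal_empty]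
    refine Set.disjoint_left.2 fun v hv hv' => hab (abs_le.2 ⟨?_, ?_⟩) <;>
      linarith [hv.1, hv.2, hv'.1, hv'.2]

lemma integral_norm_sq_sum_smul_translate_le {φ : 𝓢(ℝ, ℂ)} (hφ : ∀ v, ‖φ v‖ ≤ 1)
    (hsupp : ∀ v, 1 / 2 < |v| → φ v = 0) {s : Finset ι} {w : ι → ℂ} {W : ℝ}
    (hw : ∀ i ∈ s, ‖w i‖ ≤ W) (μ : ι → ℝ) :
    ∫ v, ‖(∑ i ∈ s, w i • φ.compSubConstCLM ℂ (-μ i)) v‖ ^ 2 ≤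
      W ^ 2 * ((s ×ˢ s).filter fun x => |μ x.1 - μ x.2| ≤ 1).card := by
  let S (i : ι) : Set ℝ := Set.Icc (-μ i - 1 / 2) (-μ i + 1 / 2)
  have hterm (i : ι) (hi : i ∈ s) (v : ℝ) :
      ‖(w i • φ.compSubConstCLM ℂ (-μ i)) v‖ ≤ W * (S i).indicator 1 v := by
    rw [smul_apply, compSubConstCLM_apply, norm_smul]
    by_cases hv : v ∈ S i
    · rw [Set.indicator_of_mem hv]
      exact mul_le_mul (hw i hi) (hφ _) (norm_nonneg _) ((norm_nonneg _).trans (hw i hi))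
    · rw [Set.indicator_of_notMem hv, hsupp, norm_zero, mul_zero, mul_zero]
      contrapose! hv
      constructor <;> linarith [abs_le.1 hv]
  have hpoint (v : ℝ) : ‖(∑ i ∈ s, w i • φ.compSubConstCLM ℂ (-μ i)) v‖ ^ 2 ≤
      W ^ 2 * ∑ x ∈ s ×ˢ s, (S x.1 ∩ S x.2).indicator 1 v := by
    calc _ ≤ (∑ i ∈ s, W * (S i).indicator 1 v) ^ 2 := by
          rw [sum_apply]; gcongr
          exact (norm_sum_le _ _).trans (Finset.sum_le_sum fun i hi => hterm i hi v)
      _ = _ := by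
          rw [← Finset.mul_sum, mul_pow, sq (∑ i ∈ s, _), Finset.sum_mul_sum,
            ← Finset.sum_product']
          simp only [Set.inter_indicator_one, Pi.mul_apply]
  have hInt (x : ι × ι) : Integrable ((S x.1 ∩ S x.2).indicator (1 : ℝ → ℝ)) := by
    have hfinite : IntegrableOn (1 : ℝ → ℝ) (S x.1 ∩ S x.2) :=
      (continuous_const.integrableOn_Icc).mono_set Set.inter_subset_left
    exact hfinite.integrable_indicator (measurableSet_Icc.inter measurableSet_Icc)
  calc _ ≤ ∫ v, W ^ 2 * ∑ x ∈ s ×ˢ s, (S x.1 ∩ S x.2).indicator 1 v :=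
        integral_mono (integrable_norm_sq _)
          ((integrable_finsetSum _ fun x _ => hInt x).const_mul _) hpoint
    _ = W ^ 2 * ∑ x ∈ s ×ˢ s, volume.real (S x.1 ∩ S x.2) := by
        rw [integral_const_mul, integral_finsetSum _ fun x _ => hInt x]
        simp only [integral_indicator_one (measurableSet_Icc.inter measurableSet_Icc), S]
    _ ≤ W ^ 2 * ∑ x ∈ s ×ˢ s, if |μ x.1 - μ x.2| ≤ 1 then 1 else 0 := by
        gcongr with x
        refine (volume_real_Icc_inter_Icc_le (-μ x.1) (-μ x.2)).trans_eq ?_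
        rw [neg_sub_neg, abs_sub_comm]
    _ = _ := by rw [Finset.sum_boole]

lemma continuous_sum_mul_e (s : Finset ι) (w : ι → ℂ) (μ : ι → ℝ) :
    Continuous fun α => ∑ i ∈ s, w i * e (μ i * α) :=
  continuous_finsetSum _ fun i _ => continuous_const.mul (continuous_e.comp (by fun_prop))

lemma exists_integral_norm_sq_sum_e_le : ∃ K > 0, ∀ (s : Finset ι) (w : ι → ℂ) (μ : ι → ℝ)
    (W : ℝ), (∀ i ∈ s, ‖w i‖ ≤ W) → ∫ α in (-1)..1, ‖∑ i ∈ s, w i * e (μ i * α)‖ ^ 2 ≤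
      K * (W ^ 2 * ((s ×ˢ s).filter fun x => |μ x.1 - μ x.2| ≤ 1).card) := by
  obtain ⟨φ, c, hc, hφ, hsupp, hfourier⟩ := exists_bump_le_norm_fourier
  refine ⟨(c ^ 2)⁻¹, by positivity, fun s w μ W hw => ?_⟩
  rw [← div_eq_inv_mul, le_div_iff₀' (by positivity)]
  set f := ∑ i ∈ s, w i • φ.compSubConstCLM ℂ (-μ i) with hf
  have hle (α : ℝ) (hα : α ∈ Set.Icc (-1 : ℝ) 1) :
      c ^ 2 * ‖∑ i ∈ s, w i * e (μ i * α)‖ ^ 2 ≤ ‖𝓕 f α‖ ^ 2 := by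
    rw [hf, fourier_sum_smul_translate, norm_mul, mul_pow, mul_comm]
    gcongr
    exact hfourier α (abs_le.2 hα)
  have hcont : Continuous fun α => c ^ 2 * ‖∑ i ∈ s, w i * e (μ i * α)‖ ^ 2 :=
    continuous_const.mul ((continuous_sum_mul_e s w μ).norm.pow 2)
  calc c ^ 2 * ∫ α in (-1)..1, ‖∑ i ∈ s, w i * e (μ i * α)‖ ^ 2
      = ∫ α in Set.Ioc (-1) 1, c ^ 2 * ‖∑ i ∈ s, w i * e (μ i * α)‖ ^ 2 := by
        rw [← intervalIntegral.integral_const_mul, intervalIntegral.integral_of_le (by norm_num)]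
    _ ≤ ∫ α in Set.Ioc (-1) 1, ‖𝓕 f α‖ ^ 2 :=
        setIntegral_mono_on hcont.integrableOn_Ioc (integrable_norm_sq _).integrableOn
          measurableSet_Ioc fun α hα => hle α (Set.Ioc_subset_Icc_self hα)
    _ ≤ ∫ α, ‖𝓕 f α‖ ^ 2 := setIntegral_le_integral (integrable_norm_sq _)
        (.of_forall fun α => by positivity)
    _ = ∫ v, ‖f v‖ ^ 2 := integral_norm_sq_fourier f
    _ ≤ _ := integral_norm_sq_sum_smul_translate_le hφ hsupp hw μ

lemma exists_integral_norm_sq_sum_e_le_mul : ∃ K > 0, ∀ (s : Finset ι) (w : ι → ℂ) (μ : ι → ℝ)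
    (W : ℝ), (∀ i ∈ s, ‖w i‖ ≤ W) → ∀ T > 0,
      ∫ α in (-T)..T, ‖∑ i ∈ s, w i * e (μ i * α)‖ ^ 2 ≤
        K * T * (W ^ 2 * ((s ×ˢ s).filter fun x => |μ x.1 - μ x.2| ≤ 1 / T).card) := by
  obtain ⟨K, hK, hunit⟩ := exists_integral_norm_sq_sum_e_le (ι := ι)
  refine ⟨K, hK, fun s w μ W hw T hT => ?_⟩
  have hscale := hunit s w (fun i => T * μ i) W hw
  simp only [← mul_sub, abs_mul, abs_of_pos hT, ← le_div_iff₀' hT] at hscale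
  calc ∫ α in (-T)..T, ‖∑ i ∈ s, w i * e (μ i * α)‖ ^ 2
      = T * ∫ α in (-1)..1, ‖∑ i ∈ s, w i * e (μ i * (T * α))‖ ^ 2 := by
        rw [intervalIntegral.mul_integral_comp_mul_left
          (f := fun α => ‖∑ i ∈ s, w i * e (μ i * α)‖ ^ 2), mul_neg, mul_one]
    _ ≤ T * (K * _) := by
        refine mul_le_mul_of_nonneg_left (le_of_eq_of_le ?_ hscale) hT.le
        simp only [mul_left_comm, mul_assoc]
    _ = _ := by ring

end MeanSquare

/-! ### Counting near-solutions -/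

section Counting

variable {k ρ η Y : ℝ}

lemma geom_sum_le_two_mul_pow {u : ℝ} (hu : 2 ≤ u) (M : ℕ) :
    ∑ n ∈ Finset.range (M + 1), u ^ n ≤ 2 * u ^ M := by
  rw [geom_sum_eq (by linarith), div_le_iff₀ (by linarith), pow_succ]
  nlinarith [pow_pos (two_pos.trans_le hu) M]

lemma exists_sum_card_nearSolutions_le {r : ℝ} (hk : 1 < k) (hr : 0 < r) (hη : 0 < η) :
    ∃ A > 0, ∀ M : ℕ, ∑ n ∈ Finset.range (M + 1), ((nearSolutions k r n).card : ℝ) ≤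
      A * (2 ^ M) ^ (2 + η) := by
  obtain ⟨A, hA, hdensity⟩ := exists_density_le_mul_pow hk hr (one_lt_rpow one_lt_two hη)
  refine ⟨2 * (A + 1), by positivity, fun M => ?_⟩
  have hbase : (4 : ℝ) * 2 ^ η = 2 ^ (2 + η) := by
    rw [rpow_add two_pos]; norm_num
  have hbase_ge : (2 : ℝ) ≤ 2 ^ (2 + η) := self_le_rpow_of_one_le one_le_two (by linarith)
  have hcard (n : ℕ) : ((nearSolutions k r n).card : ℝ) ≤ (A + 1) * ((2 : ℝ) ^ (2 + η)) ^ n := by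
    have hn := hdensity n
    rw [density, div_le_iff₀ (by positivity)] at hn
    calc ((nearSolutions k r n).card : ℝ) ≤ A * (2 ^ η) ^ n * 4 ^ n := hn
      _ ≤ (A + 1) * (2 ^ η) ^ n * 4 ^ n := by gcongr; exact (lt_add_one A).le
      _ = (A + 1) * ((2 : ℝ) ^ (2 + η)) ^ n := by rw [← hbase, mul_pow]; ring
  calc ∑ n ∈ Finset.range (M + 1), ((nearSolutions k r n).card : ℝ)
      ≤ ∑ n ∈ Finset.range (M + 1), (A + 1) * ((2 : ℝ) ^ (2 + η)) ^ n :=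
        Finset.sum_le_sum fun n _ => hcard n
    _ = (A + 1) * ∑ n ∈ Finset.range (M + 1), ((2 : ℝ) ^ (2 + η)) ^ n := (Finset.mul_sum _ _ _).symm
    _ ≤ (A + 1) * (2 * ((2 : ℝ) ^ (2 + η)) ^ M) := by
        gcongr; exact geom_sum_le_two_mul_pow hbase_ge M
    _ = 2 * (A + 1) * (2 ^ M) ^ (2 + η) := by rw [rpow_pow_comm zero_le_two]; ring

lemma min_one_rpow_le_rpow {t : ℝ} (a : ℝ) (hρ : 0 < ρ) (ht : t ∈ Set.Icc ρ 1) :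
    min 1 (ρ ^ a) ≤ t ^ a := by
  obtain ha | ha := le_total 0 a
  · exact (min_le_right _ _).trans (rpow_le_rpow hρ.le ht.1 ha)
  · exact (min_le_left _ _).trans
      (one_le_rpow_of_pos_of_le_one_of_nonpos (hρ.trans_le ht.1) ht.2 ha)

lemma abs_log_div_le_abs_log {a b : ℝ} (hρ : 0 < ρ) (hY : 0 < Y) (ha : a ∈ Set.Icc (ρ * Y) Y)
    (hb : b ∈ Set.Icc (ρ * Y) Y) : |log (a / b)| ≤ |log ρ| := by
  have hρY := mul_pos hρ hY
  have hlog {z : ℝ} (hz : z ∈ Set.Icc (ρ * Y) Y) : log z ∈ Set.Icc (log ρ + log Y) (log Y) := by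
    rw [← log_mul hρ.ne' hY.ne']
    exact ⟨log_le_log hρY hz.1, log_le_log (hρY.trans_le hz.1) hz.2⟩
  rw [log_div (hρY.trans_le ha.1).ne' (hρY.trans_le hb.1).ne', abs_le]
  constructor <;> linarith [(hlog ha).1, (hlog ha).2, (hlog hb).1, (hlog hb).2, neg_abs_le (log ρ)]

lemma mem_nearSolutions_log {v : Fin 4 → ℤ} (hρ : 0 < ρ) (hY : 0 < Y)
    (hv : ∀ j, (v j : ℝ) ∈ Set.Icc (ρ * Y) Y)
    (hdefect : |(v 0 : ℝ) ^ k + (v 1 : ℝ) ^ k - (v 2 : ℝ) ^ k - (v 3 : ℝ) ^ k| ≤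
      min 1 (ρ ^ (k - 2)) * Y ^ (k - 2)) :
    v ∈ nearSolutions k (|log ρ| + 1) (Nat.log 2 (v 3).toNat) := by
  have hpos (j : Fin 4) : 0 < v j := by exact_mod_cast (mul_pos hρ hY).trans_le (hv j).1
  have hpos' (j : Fin 4) : (0 : ℝ) < v j := by exact_mod_cast hpos j
  have hnat : ((v 3).toNat : ℤ) = v 3 := Int.toNat_of_nonneg (hpos 3).le
  refine (mem_nearSolutions (by positivity)).2 ⟨hpos, ?_, ?_, fun j => ?_, hdefect.trans ?_⟩
  · rw [← hnat]
    exact_mod_cast Nat.pow_log_le_self 2 (Int.lt_toNat.2 (hpos 3)).ne'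
  · rw [← hnat]
    exact_mod_cast Nat.lt_pow_succ_log_self one_lt_two (v 3).toNat
  · calc |log (ratios v j)| ≤ |log ρ| := abs_log_div_le_abs_log hρ hY (hv _) (hv 3)
      _ ≤ (|log ρ| + 1) * 1 := by linarith
      _ ≤ (|log ρ| + 1) * (1 + (1 / 2) ^ Nat.log 2 (v 3).toNat) := by
          gcongr; exact le_add_of_nonneg_right (by positivity)
  · calc min 1 (ρ ^ (k - 2)) * Y ^ (k - 2) ≤ (v 3 / Y) ^ (k - 2) * Y ^ (k - 2) := by
          gcongr
          exact min_one_rpow_le_rpow _ hρ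
            ⟨(le_div_iff₀ hY).2 (hv 3).1, (div_le_one hY).2 (hv 3).2⟩
      _ = (v 3 : ℝ) ^ (k - 2) := by
          rw [← mul_rpow (div_pos (hpos' 3) hY).le hY.le, div_mul_cancel₀ _ hY.ne']

/-- The Robert–Sargos bound, at the critical width `Y ^ (k - 2)`. -/
lemma exists_card_le_of_abs_defect_le (hk : 1 < k) (hρ : 0 < ρ) (hη : 0 < η) :
    ∃ c > 0, ∃ A > 0, ∀ Y ≥ (1 : ℝ), ∀ S : Finset (Fin 4 → ℤ),
      (∀ v ∈ S, (∀ j, (v j : ℝ) ∈ Set.Icc (ρ * Y) Y) ∧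
        |(v 0 : ℝ) ^ k + (v 1 : ℝ) ^ k - (v 2 : ℝ) ^ k - (v 3 : ℝ) ^ k| ≤ c * Y ^ (k - 2)) →
      (S.card : ℝ) ≤ A * Y ^ (2 + η) := by
  classical
  obtain ⟨A, hA, hsum⟩ :=
    exists_sum_card_nearSolutions_le (r := |log ρ| + 1) hk (by positivity) hη
  refine ⟨min 1 (ρ ^ (k - 2)), by positivity, A, hA, fun Y hY S hS => ?_⟩
  set M := Nat.log 2 ⌊Y⌋₊
  have hM : (2 : ℝ) ^ M ≤ Y := by
    have hle : 2 ^ M ≤ ⌊Y⌋₊ := Nat.pow_log_le_self 2 (Nat.floor_pos.2 hY).ne'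
    exact_mod_cast (Nat.le_floor_iff (zero_le_one.trans hY)).1 hle
  have hsub : S ⊆ (Finset.range (M + 1)).biUnion (nearSolutions k (|log ρ| + 1)) := by
    intro v hvS
    obtain ⟨hv, hdefect⟩ := hS v hvS
    refine Finset.mem_biUnion.2 ⟨Nat.log 2 (v 3).toNat, Finset.mem_range_succ_iff.2 ?_,
      mem_nearSolutions_log hρ (one_pos.trans_le hY) hv hdefect⟩
    refine Nat.log_mono_right (Int.toNat_le.2 ?_)
    rw [Int.natCast_floor_eq_floor (zero_le_one.trans hY)]
    exact Int.le_floor.2 (hv 3).2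
  calc (S.card : ℝ) ≤ ∑ n ∈ Finset.range (M + 1), ((nearSolutions k (|log ρ| + 1) n).card : ℝ) := by
        exact_mod_cast (Finset.card_le_card hsub).trans Finset.card_biUnion_le
    _ ≤ A * (2 ^ M) ^ (2 + η) := hsum M
    _ ≤ A * Y ^ (2 + η) := by gcongr

end Counting

/-! ### The fourth moment -/

section FourthMoment

variable {k ρ η : ℝ}

lemma norm_sum_mul_e_pow_four {ι : Type*} (s : Finset ι) (w : ι → ℂ) (μ : ι → ℝ) (α : ℝ) :
    ‖∑ i ∈ s, w i * e (μ i * α)‖ ^ 4 =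
      ‖∑ x ∈ s ×ˢ s, w x.1 * w x.2 * e ((μ x.1 + μ x.2) * α)‖ ^ 2 := by
  rw [show 4 = 2 * 2 from rfl, pow_mul, ← norm_pow, sq (∑ i ∈ s, _), Finset.sum_mul_sum,
    ← Finset.sum_product']
  simp only [add_mul, e_add, mul_mul_mul_comm]

lemma exists_card_quadruples_le (hk : 1 < k) (hρ : 0 < ρ) (hη : 0 < η) :
    ∃ c > 0, ∃ A > 0, ∀ Y ≥ (1 : ℝ), ∀ s : Finset ℕ, (∀ n ∈ s, (n : ℝ) ∈ Set.Icc (ρ * Y) Y) →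
      ((((s ×ˢ s) ×ˢ (s ×ˢ s)).filter fun x => |((x.1.1 : ℝ) ^ k + (x.1.2 : ℝ) ^ k) -
        ((x.2.1 : ℝ) ^ k + (x.2.2 : ℝ) ^ k)| ≤ c * Y ^ (k - 2)).card : ℝ) ≤ A * Y ^ (2 + η) := by
  classical
  obtain ⟨c, hc, A, hA, hcard⟩ := exists_card_le_of_abs_defect_le hk hρ hη
  refine ⟨c, hc, A, hA, fun Y hY s hs => ?_⟩
  let toVec : (ℕ × ℕ) × ℕ × ℕ → Fin 4 → ℤ := fun x => ![x.1.1, x.1.2, x.2.1, x.2.2]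
  have hinj : Function.Injective toVec := by
    rintro ⟨⟨a, b⟩, c, d⟩ ⟨⟨a', b'⟩, c', d'⟩ h
    simpa [toVec, Matrix.vecCons_inj, and_assoc] using h
  rw [← Finset.card_image_of_injective _ hinj]
  refine hcard Y hY _ fun v hv => ?_
  obtain ⟨x, hx, rfl⟩ := Finset.mem_image.1 hv
  simp only [Finset.mem_filter, Finset.mem_product, ← sub_sub] at hx
  obtain ⟨⟨⟨h0, h1⟩, h2, h3⟩, hdefect⟩ := hx
  refine ⟨fun j => ?_, by simpa [toVec] using hdefect⟩
  fin_cases j <;> simp only [toVec] <;> [exact hs _ h0; exact hs _ h1; exact hs _ h2; exact hs _ h3]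

lemma exists_integral_norm_pow_four_le (hk : 1 < k) (hρ : 0 < ρ) (hη : 0 < η) :
    ∃ C > 0, ∀ Y ≥ (1 : ℝ), ∀ s : Finset ℕ, (∀ n ∈ s, (n : ℝ) ∈ Set.Icc (ρ * Y) Y) →
      ∀ (w : ℕ → ℂ) (W : ℝ), (∀ n ∈ s, ‖w n‖ ≤ W) → ∀ τ ≥ 0,
        ∫ α in (-τ)..τ, ‖∑ n ∈ s, w n * e ((n : ℝ) ^ k * α)‖ ^ 4 ≤
          C * W ^ 4 * ((τ + Y ^ (2 - k)) * Y ^ (2 + η)) := by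
  obtain ⟨c, hc, A, hA, hcard⟩ := exists_card_quadruples_le hk hρ hη
  obtain ⟨K, hK, hmean⟩ := exists_integral_norm_sq_sum_e_le_mul (ι := ℕ × ℕ)
  refine ⟨K * A * (1 + c⁻¹), by positivity, fun Y hY s hs w W hw τ hτ => ?_⟩
  have hY0 : 0 < Y := one_pos.trans_le hY
  have hZ : 0 < Y ^ (2 - k) := rpow_pos_of_pos hY0 _
  set T := τ + c⁻¹ * Y ^ (2 - k)
  have hτT : τ ≤ T := le_add_of_nonneg_right (by positivity)
  have hT : 0 < T := by positivity
  have hwidth : 1 / T ≤ c * Y ^ (k - 2) := by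
    calc 1 / T ≤ 1 / (c⁻¹ * Y ^ (2 - k)) := by gcongr; exact le_add_of_nonneg_left hτ
      _ = c * Y ^ (k - 2) := by
          rw [← neg_sub k 2, rpow_neg hY0.le, one_div, mul_inv, inv_inv, inv_inv]
  have hpair : ∀ x ∈ s ×ˢ s, ‖w x.1 * w x.2‖ ≤ W ^ 2 := by
    intro x hx
    obtain ⟨h1, h2⟩ := Finset.mem_product.1 hx
    rw [norm_mul, sq]
    exact mul_le_mul (hw _ h1) (hw _ h2) (norm_nonneg _) ((norm_nonneg _).trans (hw _ h1))
  calc ∫ α in (-τ)..τ, ‖∑ n ∈ s, w n * e ((n : ℝ) ^ k * α)‖ ^ 4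
      ≤ ∫ α in (-T)..T, ‖∑ n ∈ s, w n * e ((n : ℝ) ^ k * α)‖ ^ 4 :=
        intervalIntegral.integral_mono_interval (neg_le_neg hτT) (by linarith) hτT
          (.of_forall fun α => by positivity)
          (((continuous_sum_mul_e s w _).norm.pow 4).intervalIntegrable _ _)
    _ ≤ K * T * ((W ^ 2) ^ 2 * (A * Y ^ (2 + η))) := by
        simp only [norm_sum_mul_e_pow_four]
        refine (hmean _ _ _ _ hpair T hT).trans ?_
        gcongr
        refine le_trans (Nat.cast_le.2 (Finset.card_le_card ?_)) (hcard Y hY s hs)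
        exact Finset.monotone_filter_right _ fun x _ hx => hx.trans hwidth
    _ ≤ K * ((1 + c⁻¹) * (τ + Y ^ (2 - k))) * ((W ^ 2) ^ 2 * (A * Y ^ (2 + η))) := by
        gcongr
        nlinarith [mul_nonneg (inv_nonneg.2 hc.le) hτ]
    _ = _ := by ring

lemma mem_Icc_rpow_inv {δ X x : ℝ} (hk : 0 < k) (hδ : 0 ≤ δ) (hX : 0 ≤ X) (hx : 0 ≤ x)
    (h : x ^ k ∈ Set.Icc (δ * X) X) : x ∈ Set.Icc (δ ^ k⁻¹ * X ^ k⁻¹) (X ^ k⁻¹) := by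
  rw [← mul_rpow hδ hX]
  exact ⟨(rpow_inv_le_iff_of_pos (mul_nonneg hδ hX) hx hk).2 h.1,
    (le_rpow_inv_iff_of_pos hx hX hk).2 h.2⟩

lemma log_pow_four_le {X ε : ℝ} (hX : 1 ≤ X) (hε : 0 < ε) :
    log X ^ 4 ≤ (8 / ε) ^ 4 * X ^ (ε / 2) := by
  have hX0 : 0 ≤ X := zero_le_one.trans hX
  calc log X ^ 4 ≤ (X ^ (ε / 8) / (ε / 8)) ^ 4 :=
        pow_le_pow_left₀ (log_nonneg hX) (log_le_rpow_div hX0 (by positivity)) 4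
    _ = (8 / ε) ^ 4 * (X ^ (ε / 8)) ^ 4 := by field_simp
    _ = (8 / ε) ^ 4 * X ^ (ε / 2) := by
        rw [← rpow_natCast (X ^ (ε / 8)), ← rpow_mul hX0]; ring_nf

lemma add_rpow_mul_rpow_of_rpow_inv {X : ℝ} (hk : 0 < k) (hX : 0 < X) (τ ε : ℝ) :
    (τ + (X ^ k⁻¹) ^ (2 - k)) * (X ^ k⁻¹) ^ (2 + k * ε / 2) =
      (τ * X ^ (2 / k) + X ^ (4 / k - 1)) * X ^ (ε / 2) := by
  have hsplit : X ^ (4 / k - 1) = X ^ (k⁻¹ * (2 - k)) * X ^ (2 / k) := by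
    rw [← rpow_add hX]; congr 1; field_simp; ring
  rw [← rpow_mul hX.le, ← rpow_mul hX.le, hsplit, ← add_mul, mul_assoc, ← rpow_add hX]
  congr 2
  field_simp

end FourthMoment

theorem Sk_fourth_moment (k δ ε : ℝ) (hk : 1 < k) (hδ0 : 0 < δ) (hδ1 : δ < 1) (hε : 0 < ε) :
    ∃ C > 0, ∀ X ≥ (2 : ℝ), ∀ τ > (0 : ℝ),
      ∫ α in (-τ)..τ, ‖Sk δ X k α‖ ^ 4 ≤ C * (τ * X ^ (2 / k) + X ^ (4 / k - 1)) * X ^ ε := by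
  have hk0 : 0 < k := one_pos.trans hk
  obtain ⟨C, hC, hmoment⟩ := exists_integral_norm_pow_four_le (ρ := δ ^ k⁻¹) (η := k * ε / 2)
    hk (by positivity) (by positivity)
  refine ⟨C * (8 / ε) ^ 4, by positivity, fun X hX τ hτ => ?_⟩
  have hX1 : 1 ≤ X := one_le_two.trans hX
  have hX0 : 0 < X := one_pos.trans_le hX1
  calc ∫ α in (-τ)..τ, ‖Sk δ X k α‖ ^ 4
      ≤ C * log X ^ 4 * ((τ + (X ^ k⁻¹) ^ (2 - k)) * (X ^ k⁻¹) ^ (2 + k * ε / 2)) := by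
        refine hmoment _ (one_le_rpow hX1 (by positivity)) _ (fun p hp => ?_) _ _
          (fun p hp => ?_) τ hτ.le <;> obtain ⟨hp, -, hlower, hupper⟩ := Finset.mem_filter.1 hp
        · exact mem_Icc_rpow_inv hk0 hδ0.le hX0.le p.cast_nonneg ⟨hlower, hupper⟩
        · rw [Complex.norm_real, norm_of_nonneg (log_natCast_nonneg p)]
          obtain ⟨hp1, hpX⟩ := Finset.mem_Icc.1 hp
          exact log_le_log (Nat.cast_pos.2 hp1) ((Nat.le_floor_iff hX0.le).1 hpX)
    _ ≤ C * ((8 / ε) ^ 4 * X ^ (ε / 2)) *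
          ((τ * X ^ (2 / k) + X ^ (4 / k - 1)) * X ^ (ε / 2)) := by
        rw [add_rpow_mul_rpow_of_rpow_inv hk0 hX0]
        gcongr
        exact log_pow_four_le hX1 hε
    _ = C * (8 / ε) ^ 4 * (τ * X ^ (2 / k) + X ^ (4 / k - 1)) * X ^ ε := by
        rw [← add_halves ε, rpow_add hX0, add_halves]; ring
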